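/- arXiv:1312.6641 — 16 statements merged into one kernel-verified Lean document; each statement's English description precedes it below -/
import Mathlib

section
/- Let n ∈ ℕ and work in the algebra End = Module.End ℚ (MvPolynomial (Fin n) ℚ) of ℚ-linear endomorphisms of the polynomial ring in n variables. For α : Fin n → ℕ let M α denote multiplication by the monomial ∏_i X_i^{α_i} and let D β = ∏_i (pderiv i)^{β_i} be the composite of partial derivatives. Then for all α, β, α', β' : Fin n → ℕ one has the composition formula (M α ∘ D β) ∘ (M α' ∘ D β') = Σ_{γ} γ! · C(β,γ) · C(α',γ) • (M (α+α'−γ) ∘ D (β+β'−γ)), where γ ranges over all multi-indices with γ_i ≤ min(β_i, α'_i) for all i, γ! = ∏_i γ_i!, and C(β,γ) = ∏_i (β_i choose γ_i). -/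
/-!
Weyl monomials send each monomial `x^m` to a multiple of a monomial, so both sides are compared there:
`∂^β x^m = (∏ i, m_i (m_i - 1) ⋯ (m_i - β_i + 1)) x^(m - β)` (`weylD_mon`), where the falling
factorial vanishes as soon as the exponent subtraction would truncate. The comparison of
coefficients splits into one identity per coordinate,
`(k + a)_b = ∑ γ ≤ min b a, γ! C(b,γ) C(a,γ) (k)_(b - γ)` for falling factorials
(`descFactorial_add_eq_sum`), which is Vandermonde's identity multiplied by `b!`; the product over
the coordinates is then expanded into a sum over multi-indices.
-/

open MvPolynomial Finset

/-- Multiplication by the monomial `x^α` as a `ℚ`-linear endomorphism of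
`MvPolynomial (Fin n) ℚ`. -/
noncomputable def weylM (n : ℕ) (α : Fin n → ℕ) :
    Module.End ℚ (MvPolynomial (Fin n) ℚ) :=
  LinearMap.mulLeft ℚ (∏ i, (MvPolynomial.X i) ^ α i)

/-- The differential operator `∂^β = ∏ i, (pderiv i)^{β i}` as a `ℚ`-linear
endomorphism of `MvPolynomial (Fin n) ℚ`. -/
noncomputable def weylD (n : ℕ) (β : Fin n → ℕ) :
    Module.End ℚ (MvPolynomial (Fin n) ℚ) :=
  (List.ofFn fun i =>
    ((MvPolynomial.pderiv i).toLinearMap : Module.End ℚ (MvPolynomial (Fin n) ℚ)) ^ β i).prod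

/-- The term `a x^m`, with the exponent given as a plain function rather than a `Finsupp`. -/
noncomputable def weylMon {n : ℕ} (m : Fin n → ℕ) (a : ℚ) : MvPolynomial (Fin n) ℚ :=
  monomial (Finsupp.equivFunOnFinite.symm m) a

lemma weylM_mon {n : ℕ} (α m : Fin n → ℕ) (a : ℚ) :
    weylM n α (weylMon m a) = weylMon (m + α) a := by
  have h : (∏ i, (X i : MvPolynomial (Fin n) ℚ) ^ α i)
      = monomial (Finsupp.equivFunOnFinite.symm α) 1 := by
    rw [monomial_eq, Finsupp.prod_fintype _ _ (by simp)]
    simp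
  rw [weylM, LinearMap.mulLeft_apply, h, weylMon, weylMon, monomial_mul, one_mul]
  congr 2
  ext i
  simp [add_comm]

lemma pderiv_mon {n : ℕ} (i : Fin n) (m : Fin n → ℕ) (a : ℚ) :
    pderiv i (weylMon m a) = weylMon (Function.update m i (m i - 1)) (a * m i) := by
  rw [weylMon, weylMon, pderiv_monomial]
  congr 2
  ext j
  by_cases h : j = i
  · subst h; simp
  · simp [h]

lemma pderiv_pow_mon {n : ℕ} (i : Fin n) (k : ℕ) (m : Fin n → ℕ) (a : ℚ) :
    (((pderiv i).toLinearMap : Module.End ℚ (MvPolynomial (Fin n) ℚ)) ^ k) (weylMon m a)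
      = weylMon (Function.update m i (m i - k)) (a * (m i).descFactorial k) := by
  induction k with
  | zero => simp
  | succ k ih =>
    rw [pow_succ', Module.End.mul_apply, ih]
    refine (pderiv_mon i _ _).trans ?_
    simp only [Function.update_self, Function.update_idem, Nat.descFactorial_succ, Nat.sub_sub]
    congr 1
    push_cast
    ring

lemma list_pderiv_pow_mon {n : ℕ} (β m : Fin n → ℕ) (a : ℚ) (l : List (Fin n)) (hl : l.Nodup) :
    ((l.map fun i =>
      ((pderiv i).toLinearMap : Module.End ℚ (MvPolynomial (Fin n) ℚ)) ^ β i).prod) (weylMon m a)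
      = weylMon (fun j => if j ∈ l then m j - β j else m j)
          (a * ((l.map fun i => (m i).descFactorial (β i)).prod : ℕ)) := by
  induction l with
  | nil => simp
  | cons i l ih =>
    rw [List.nodup_cons] at hl
    rw [List.map_cons, List.prod_cons, Module.End.mul_apply, ih hl.2, pderiv_pow_mon]
    congr 1
    · ext j
      by_cases h : j = i
      · subst h; simp [hl.1]
      · simp [h]
    · simp only [hl.1, if_false, List.map_cons, List.prod_cons]
      push_cast
      ring

lemma weylD_mon {n : ℕ} (β m : Fin n → ℕ) (a : ℚ) :
    weylD n β (weylMon m a)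
      = weylMon (m - β) (a * (∏ i, (m i).descFactorial (β i) : ℕ)) := by
  rw [weylD, List.ofFn_eq_map, list_pderiv_pow_mon β m a _ (List.nodup_finRange n)]
  congr 1
  ext j; simp

/-- Vandermonde's identity for falling factorials. -/
lemma descFactorial_add_eq_sum (k a b : ℕ) :
    (k + a).descFactorial b = ∑ γ ∈ Finset.Iic (min b a),
      γ.factorial * b.choose γ * a.choose γ * k.descFactorial (b - γ) := by
  -- The terms with `a < γ ≤ b` vanish, so the sum may run over all `γ ≤ b`.
  have hext : ∑ γ ∈ Finset.Iic (min b a),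
      γ.factorial * b.choose γ * a.choose γ * k.descFactorial (b - γ)
      = ∑ γ ∈ Finset.range (b + 1),
        γ.factorial * b.choose γ * a.choose γ * k.descFactorial (b - γ) := by
    apply Finset.sum_subset
    · intro γ; simp only [Finset.mem_Iic, Finset.mem_range]; omega
    · intro γ h1 h2
      simp only [Finset.mem_Iic, Finset.mem_range] at h1 h2
      rw [Nat.choose_eq_zero_of_lt (show a < γ by omega)]
      simp
  rw [hext, Nat.descFactorial_eq_factorial_mul_choose, add_comm k a, Nat.add_choose_eq,
    Finset.Nat.sum_antidiagonal_eq_sum_range_succ_mk, Finset.mul_sum]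
  refine Finset.sum_congr rfl fun γ hγ => ?_
  have hγ' : γ ≤ b := by simp only [Finset.mem_range] at hγ; omega
  rw [Nat.descFactorial_eq_factorial_mul_choose, ← Nat.choose_mul_factorial_mul_factorial hγ']
  ring

/-- The action of one summand of the composition formula on `x^m`. The exponent does not depend on
`γ`: where truncated subtraction would make it differ, the coefficient is zero. -/
lemma weyl_term_mon {n : ℕ} (α β α' β' γ m : Fin n → ℕ) (a : ℚ)
    (hγ : ∀ i, γ i ≤ min (β i) (α' i)) :
    weylM n (α + α' - γ) (weylD n (β + β' - γ) (weylMon m a))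
      = weylMon (m - β' + α' - β + α) (a * (∏ i, (m i).descFactorial (β' i) *
          (m i - β' i).descFactorial (β i - γ i) : ℕ)) := by
  have hd : ∀ i, (m i).descFactorial ((β + β' - γ) i)
      = (m i).descFactorial (β' i) * (m i - β' i).descFactorial (β i - γ i) := by
    intro i
    have h := hγ i
    have e : (β + β' - γ) i = β' i + (β i - γ i) := by
      simp only [Pi.add_apply, Pi.sub_apply]; omega
    rw [e, mul_comm, ← Nat.descFactorial_mul_descFactorial (Nat.le_add_right (β' i) _),
      Nat.add_sub_cancel_left]
  rw [weylD_mon, weylM_mon, ← Finset.prod_congr rfl fun i _ => hd i]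
  by_cases h0 : (∏ i, (m i).descFactorial ((β + β' - γ) i)) = 0
  · rw [h0]
    simp only [weylMon, Nat.cast_zero, mul_zero, map_zero]
  · congr 1
    ext i
    have h1 := Finset.prod_ne_zero_iff.1 h0 i (Finset.mem_univ i)
    rw [Ne, Nat.descFactorial_eq_zero_iff_lt] at h1
    have h := hγ i
    simp only [Pi.add_apply, Pi.sub_apply] at h1 ⊢
    omega

/-- Composition rule for Weyl monomials:
`x^α ∂^β ∘ x^{α'} ∂^{β'} = Σ_γ γ! C(β,γ) C(α',γ) x^{α+α'-γ} ∂^{β+β'-γ}`,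
the sum being over all multi-indices `γ` with `γ i ≤ min (β i) (α' i)`. -/
theorem weyl_monomial_comp (n : ℕ) (α β α' β' : Fin n → ℕ) :
    (weylM n α * weylD n β) * (weylM n α' * weylD n β') =
      ∑ γ ∈ Finset.Iic (fun i => min (β i) (α' i)),
        ((∏ i, (Nat.factorial (γ i) * Nat.choose (β i) (γ i) * Nat.choose (α' i) (γ i)) : ℕ) : ℚ) •
          (weylM n (α + α' - γ) * weylD n (β + β' - γ)) := by
  refine (MvPolynomial.basisMonomials (Fin n) ℚ).ext fun s => ?_
  obtain ⟨m, rfl⟩ := Finsupp.equivFunOnFinite.symm.surjective s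
  rw [coe_basisMonomials]
  change (weylM n α * weylD n β * (weylM n α' * weylD n β')) (weylMon m 1)
    = (∑ γ ∈ Finset.Iic (fun i => min (β i) (α' i)),
        ((∏ i, (Nat.factorial (γ i) * Nat.choose (β i) (γ i) * Nat.choose (α' i) (γ i)) : ℕ) : ℚ) •
          (weylM n (α + α' - γ) * weylD n (β + β' - γ))) (weylMon m 1)
  rw [LinearMap.sum_apply]
  simp only [LinearMap.smul_apply, Module.End.mul_apply]
  have hset : Finset.Iic (fun i => min (β i) (α' i))
      = Fintype.piFinset fun i => Finset.Iic (min (β i) (α' i)) := by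
    ext γ
    simp [Pi.le_def]
  have hterm : ∀ γ ∈ Finset.Iic (fun i => min (β i) (α' i)), _ := fun γ hγ =>
    congrArg (fun p => ((∏ i, (Nat.factorial (γ i) * Nat.choose (β i) (γ i) *
      Nat.choose (α' i) (γ i)) : ℕ) : ℚ) • p)
      (weyl_term_mon α β α' β' γ m 1 (Finset.mem_Iic.1 hγ))
  rw [Finset.sum_congr rfl hterm, weylD_mon, weylM_mon, weylD_mon, weylM_mon]
  simp only [weylMon, smul_monomial, smul_eq_mul, one_mul]
  rw [← map_sum]
  congr 1
  simp only [← Nat.cast_mul, ← Nat.cast_sum, ← Finset.prod_mul_distrib]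
  rw [hset, ← Finset.prod_univ_sum (fun i => Finset.Iic (min (β i) (α' i)))
    (fun i c => c.factorial * (β i).choose c * (α' i).choose c *
      ((m i).descFactorial (β' i) * (m i - β' i).descFactorial (β i - c)))]
  congr 1
  refine Finset.prod_congr rfl fun i _ => ?_
  rw [Pi.add_apply, Pi.sub_apply, descFactorial_add_eq_sum, Finset.mul_sum]
  exact Finset.sum_congr rfl fun c _ => by ring
end

section
/- Let n ∈ ℕ and work in End = Module.End ℚ (MvPolynomial (Fin n) ℚ). For α : Fin n → ℕ let M α be multiplication by the monomial x^α and D β = ∏_i (pderiv i)^{β_i}. For ω : Fin n → ℤ, let W ω be the ℚ-submodule of End spanned by all operators M a ∘ D b with (a_i : ℤ) − b_i = ω_i for every i; for l ∈ ℤ let V l be the ℚ-span of all M a ∘ D b with Σ_i ((a_i : ℤ) − b_i) = l. Then for all ω, ω' : Fin n → ℤ and all X ∈ W ω, X' ∈ W ω', the composite X ∘ X' lies in W (ω + ω'); and for all l, l' ∈ ℤ and X ∈ V l, X' ∈ V l', the composite X ∘ X' lies in V (l + l'). -/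
/-!
By bilinearity it suffices to multiply two monomials `x^a ∂^b` and `x^c ∂^d`. Left
multiplication by `x^a` visibly shifts the multi-weight by `a`. Left multiplication by a single
`∂_i` shifts it by `-e_i`: the Leibniz rule gives `∂_i x^a = x^a ∂_i + a_i x^(a - e_i)`, and
`∂_i ∂^b = ∂^(b + e_i)` since partial derivatives commute. Peeling off one derivative at a time,
`∂^b` shifts the multi-weight by `-b`. The statement on weights follows, because a monomial of
weight `l` is homogeneous for some multi-weight with coordinate sum `l`.
-/

open MvPolynomial Finset

/-- The multi-weight-`ω` subspace of the Weyl algebra: the `ℚ`-span of the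
monomials `x^a ∂^b` with `a - b = ω` componentwise. -/
noncomputable def weylMultiWeight (n : ℕ) (ω : Fin n → ℤ) :
    Submodule ℚ (Module.End ℚ (MvPolynomial (Fin n) ℚ)) :=
  Submodule.span ℚ {X | ∃ a b : Fin n → ℕ,
    (∀ i, (a i : ℤ) - (b i : ℤ) = ω i) ∧ X = weylM n a * weylD n b}

/-- The weight-`l` subspace of the Weyl algebra: the `ℚ`-span of the
monomials `x^a ∂^b` with `Σ_i (a i - b i) = l`. -/
noncomputable def weylWeight (n : ℕ) (l : ℤ) :
    Submodule ℚ (Module.End ℚ (MvPolynomial (Fin n) ℚ)) :=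
  Submodule.span ℚ {X | ∃ a b : Fin n → ℕ,
    (∑ i, ((a i : ℤ) - (b i : ℤ))) = l ∧ X = weylM n a * weylD n b}

theorem pderiv_toLinearMap_commute (n : ℕ) (i j : Fin n) :
    Commute ((pderiv i).toLinearMap : Module.End ℚ (MvPolynomial (Fin n) ℚ))
      (pderiv j).toLinearMap := by
  -- The commutator of two derivations is a derivation, so it is enough to see it kill each `X k`.
  have h : ⁅pderiv (R := ℚ) i, pderiv (R := ℚ) j⁆ = 0 := by
    apply MvPolynomial.derivation_ext
    intro k
    simp [Derivation.commutator_apply, pderiv_X, Pi.single_apply, apply_ite]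
  ext1 p
  ext1
  have hp := congrArg (fun d => d (monomial p 1)) h
  simp only [Derivation.commutator_apply, Derivation.zero_apply, sub_eq_zero] at hp
  exact hp

/-- An ordered product of powers of commuting elements absorbs one more factor, whatever its
position in the list. -/
theorem prod_ofFn_pow_add_single {R : Type*} [Monoid R] : ∀ {m : ℕ} (g : Fin m → R)
    (_ : ∀ i j, Commute (g i) (g j)) (b : Fin m → ℕ) (i : Fin m),
    (List.ofFn fun j => g j ^ (b + Pi.single i 1 : Fin m → ℕ) j).prod =
      g i * (List.ofFn fun j => g j ^ b j).prod := by
  intro m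
  induction m with
  | zero => intro g _ b i; exact i.elim0
  | succ m ih =>
    intro g hg b i
    rw [List.ofFn_succ, List.ofFn_succ, List.prod_cons, List.prod_cons]
    induction i using Fin.cases with
    | zero => simp [pow_succ', mul_assoc]
    | succ i =>
      have h := ih (fun j => g j.succ) (fun _ _ => hg _ _) (fun j => b j.succ) i
      have e : ∀ j : Fin m, (b + Pi.single i.succ 1 : Fin (m + 1) → ℕ) j.succ =
          ((fun j => b j.succ) + Pi.single i 1 : Fin m → ℕ) j := by
        intro j
        simp [Pi.single_apply]
      simp only [e, h]
      rw [← mul_assoc, ← mul_assoc, ((hg i.succ 0).pow_right (b 0)).eq]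
      simp

theorem weylD_add_single (n : ℕ) (b : Fin n → ℕ) (i : Fin n) :
    weylD n (b + Pi.single i 1) = (pderiv i).toLinearMap * weylD n b :=
  prod_ofFn_pow_add_single _ (pderiv_toLinearMap_commute n) b i

theorem weylD_zero (n : ℕ) : weylD n 0 = 1 := by
  simp [weylD]

theorem weylM_mul (n : ℕ) (a a' : Fin n → ℕ) :
    weylM n a * weylM n a' = weylM n (a + a') := by
  ext1 p
  simp [weylM, pow_add, Finset.prod_mul_distrib, Module.End.mul_eq_comp]

theorem prod_X_pow_eq (n : ℕ) (a : Fin n → ℕ) :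
    (∏ i, (X i : MvPolynomial (Fin n) ℚ) ^ a i) = monomial (Finsupp.equivFunOnFinite.symm a) 1 := by
  rw [monomial_eq, Finsupp.prod_fintype _ _ (by simp)]
  simp

/-- The Leibniz rule as a commutation relation. The truncated subtraction is harmless, since the
last term vanishes when `a i = 0`. -/
theorem pderiv_mul_weylM (n : ℕ) (a : Fin n → ℕ) (i : Fin n) :
    (pderiv i).toLinearMap * weylM n a =
      weylM n a * (pderiv i).toLinearMap + (a i : ℚ) • weylM n (a - Pi.single i 1) := by
  have e : Finsupp.equivFunOnFinite.symm a - Finsupp.single i 1 =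
      Finsupp.equivFunOnFinite.symm (a - Pi.single i 1) := by
    ext j
    simp [Finsupp.single_apply, Pi.single_apply, eq_comm]
  refine LinearMap.ext fun p => ?_
  simp only [weylM, Module.End.mul_apply, LinearMap.add_apply, LinearMap.smul_apply,
    LinearMap.mulLeft_apply, prod_X_pow_eq, Derivation.coeFn_coe,
    Derivation.leibniz, pderiv_monomial, e, smul_eq_mul]
  rw [← smul_mul_assoc, smul_monomial, mul_comm p]
  simp

theorem weylM_mul_mem (n : ℕ) (a : Fin n → ℕ) (ω : Fin n → ℤ)
    (Y : Module.End ℚ (MvPolynomial (Fin n) ℚ)) (hY : Y ∈ weylMultiWeight n ω) :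
    weylM n a * Y ∈ weylMultiWeight n (fun i => a i + ω i) := by
  induction hY using Submodule.span_induction with
  | mem x hx =>
    obtain ⟨c, d, h, rfl⟩ := hx
    refine Submodule.subset_span ⟨a + c, d, fun i => ?_, ?_⟩
    · simp only [← h i, Pi.add_apply, Nat.cast_add]; ring
    · rw [← mul_assoc, weylM_mul]
  | zero => simp
  | add x y _ _ hx hy => rw [mul_add]; exact add_mem hx hy
  | smul c x _ hx => rw [mul_smul_comm]; exact Submodule.smul_mem _ _ hx

theorem pderiv_mul_mem (n : ℕ) (i : Fin n) (ω : Fin n → ℤ)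
    (Y : Module.End ℚ (MvPolynomial (Fin n) ℚ)) (hY : Y ∈ weylMultiWeight n ω) :
    (pderiv i).toLinearMap * Y ∈ weylMultiWeight n (ω - Pi.single i 1) := by
  induction hY using Submodule.span_induction with
  | mem x hx =>
    obtain ⟨c, d, h, rfl⟩ := hx
    rw [← mul_assoc, pderiv_mul_weylM, add_mul, mul_assoc, ← weylD_add_single, smul_mul_assoc]
    refine add_mem (Submodule.subset_span ⟨c, _, fun j => ?_, rfl⟩) ?_
    · have := h j
      by_cases hj : j = i
      · subst hj; simp; lia
      · simp [hj]; lia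
    · by_cases hc : c i = 0
      · simp [hc]
      refine Submodule.smul_mem _ _ (Submodule.subset_span ⟨_, d, fun j => ?_, rfl⟩)
      have := h j
      by_cases hj : j = i
      · subst hj; simp; lia
      · simp [hj]; lia
  | zero => simp
  | add x y _ _ hx hy => rw [mul_add]; exact add_mem hx hy
  | smul c x _ hx => rw [mul_smul_comm]; exact Submodule.smul_mem _ _ hx

theorem weylD_mul_mem (n : ℕ) (ω : Fin n → ℤ)
    (Y : Module.End ℚ (MvPolynomial (Fin n) ℚ)) (hY : Y ∈ weylMultiWeight n ω) (k : ℕ) :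
    ∀ b : Fin n → ℕ, ∑ i, b i = k →
      weylD n b * Y ∈ weylMultiWeight n (fun i => ω i - b i) := by
  induction k with
  | zero =>
    intro b hb
    obtain rfl : b = 0 := by
      funext i
      exact (Finset.sum_eq_zero_iff.mp hb) i (Finset.mem_univ i)
    simpa [weylD_zero] using hY
  | succ k ih =>
    intro b hb
    obtain ⟨i, -, hi⟩ : ∃ i ∈ Finset.univ, b i ≠ 0 :=
      Finset.exists_ne_zero_of_sum_ne_zero (by rw [hb]; simp)
    obtain ⟨c, rfl⟩ : ∃ c : Fin n → ℕ, b = c + Pi.single i 1 := by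
      refine ⟨b - Pi.single i 1, ?_⟩
      funext j
      by_cases hj : j = i
      · subst hj; simp; lia
      · simp [hj]
    have hc : ∑ j, c j = k := by
      simpa [Finset.sum_add_distrib] using hb
    rw [weylD_add_single, mul_assoc]
    convert pderiv_mul_mem n i _ _ (ih c hc) using 2
    funext j
    by_cases hj : j = i
    · subst hj; simp; lia
    · simp [hj]

/-- A product is multi-homogeneous as soon as its left factor is a monomial and its right factor
is multi-homogeneous. -/
theorem weyl_monomial_mul_mem (n : ℕ) (a b : Fin n → ℕ) (ω : Fin n → ℤ)
    (Y : Module.End ℚ (MvPolynomial (Fin n) ℚ)) (hY : Y ∈ weylMultiWeight n ω) :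
    weylM n a * weylD n b * Y ∈ weylMultiWeight n (fun i => (a i - b i) + ω i) := by
  rw [mul_assoc]
  convert weylM_mul_mem n a _ _ (weylD_mul_mem n ω Y hY _ b rfl) using 2
  funext i
  ring

theorem weylMultiWeight_le_weylWeight (n : ℕ) (ω : Fin n → ℤ) :
    weylMultiWeight n ω ≤ weylWeight n (∑ i, ω i) := by
  refine Submodule.span_mono ?_
  rintro _ ⟨a, b, h, rfl⟩
  exact ⟨a, b, Finset.sum_congr rfl fun i _ => h i, rfl⟩

/-- Products of (multi-)weight-homogeneous operators add the (multi-)weights: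
the Weyl algebra is `ℤ^n`-graded by multi-weight and `ℤ`-graded by weight. -/
theorem weyl_weight_grading (n : ℕ) :
    (∀ (ω ω' : Fin n → ℤ) (X X' : Module.End ℚ (MvPolynomial (Fin n) ℚ)),
        X ∈ weylMultiWeight n ω → X' ∈ weylMultiWeight n ω' →
          X * X' ∈ weylMultiWeight n (ω + ω')) ∧
    (∀ (l l' : ℤ) (X X' : Module.End ℚ (MvPolynomial (Fin n) ℚ)),
        X ∈ weylWeight n l → X' ∈ weylWeight n l' →
          X * X' ∈ weylWeight n (l + l')) := by
  constructor
  · intro ω ω' X X' hX hX'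
    induction hX using Submodule.span_induction with
    | mem x hx =>
      obtain ⟨a, b, h, rfl⟩ := hx
      convert weyl_monomial_mul_mem n a b ω' X' hX' using 2
      funext i
      rw [Pi.add_apply, h i]
    | zero => simp
    | add x y _ _ hx hy => rw [add_mul]; exact add_mem hx hy
    | smul c x _ hx => rw [smul_mul_assoc]; exact Submodule.smul_mem _ _ hx
  · intro l l' X X' hX hX'
    induction hX using Submodule.span_induction with
    | mem x hx =>
      obtain ⟨a, b, h, rfl⟩ := hx
      induction hX' using Submodule.span_induction with
      | mem y hy =>
        obtain ⟨c, d, h', rfl⟩ := hy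
        have hm := weylMultiWeight_le_weylWeight n _ (weyl_monomial_mul_mem n a b _ _
          (Submodule.subset_span ⟨c, d, fun i => rfl, rfl⟩))
        rwa [Finset.sum_add_distrib, h, h'] at hm
      | zero => simp
      | add x y _ _ hx hy => rw [mul_add]; exact add_mem hx hy
      | smul c x _ hx => rw [mul_smul_comm]; exact Submodule.smul_mem _ _ hx
    | zero => simp
    | add x y _ _ hx hy => rw [add_mul]; exact add_mem hx hy
    | smul c x _ hx => rw [smul_mul_assoc]; exact Submodule.smul_mem _ _ hx
end

section
/- Let α, β, α', β', θ : Fin n → ℕ satisfy α + α' = β + β' = θ (componentwise). Then in ℚ: Σ_γ γ! · C(β,γ) · C(α',γ) · (θ−γ)! = 2^{(||α'|| − ||β'|| : ℤ)} · Σ_γ γ! · C(β',γ) · C(α,γ) · (θ−γ)!, where on the left γ ranges over multi-indices with γ_i ≤ min(β_i, α'_i), on the right over multi-indices with γ_i ≤ min(β'_i, α_i), γ! = ∏_i γ_i!, C(β,γ) = ∏_i (β_i choose γ_i), (θ−γ)! = ∏_i (θ_i−γ_i)!, and ||α|| = Σ_i α_i. (This is the symmetry (X,Y) = 2^{l(Y)}(Y,X)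 of the Frobenius form evaluated on Weyl monomials X = x^α∂^β, Y = x^{α'}∂^{β'}.) -/
/-!
Both sides factor over the coordinates, so the claim reduces to one variable: for
`F(b, c, θ) = ∑ k, k! C(b,k) C(c,k) (θ-k)!` and `b + p = c + q = θ`, one has
`2^p F(b, c, θ) = 2^c F(p, q, θ)` (`weylSum_symm`). This is Euler's transformation for
`₂F₁(-b, -c; -θ; -1)`.

The proof is by induction on `c`. Commuting one `x` past `∂^b` gives
`F(b, c+1, θ) = F(b, c, θ) + b F(b-1, c, θ-1)` (`weylSum_succ`), while
`F(p, q, θ) = p F(p-1, q, θ-1) + (θ-p) F(p, q, θ-1)` holds summand by summand for `q < θ`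
(`weylSum_theta`). The two together show that the right-hand side obeys the same recurrence in `c`.
At `c = 0` the claim is `F(p, θ, θ) = 2^p θ!`, the binomial theorem.
-/

open Finset

/-- The one-variable Frobenius pairing `∑ k, k! C(b,k) C(c,k) (θ-k)!`, that is, `T` applied to
`x^(θ-c) ∂^b x^c ∂^(θ-b)` when `b, c ≤ θ`. The range stops at `c`; summands with `k > b` vanish. -/
def weylSum (b c θ : ℕ) : ℕ :=
  ∑ k ∈ range (c + 1), k.factorial * b.choose k * c.choose k * (θ - k).factorial

lemma mul_choose_pred (b k : ℕ) : b * (b - 1).choose k = b.choose (k + 1) * (k + 1) := by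
  cases b with
  | zero => simp
  | succ b => simpa using Nat.add_one_mul_choose_eq b k

lemma weylSum_succ (b c θ : ℕ) :
    weylSum b (c + 1) θ = weylSum b c θ + b * weylSum (b - 1) c (θ - 1) := by
  have h0 : weylSum b c θ = ∑ k ∈ range (c + 1 + 1),
      k.factorial * b.choose k * c.choose k * (θ - k).factorial := by
    rw [sum_range_succ _ (c + 1)]
    simp [weylSum]
  rw [h0, weylSum, weylSum, sum_range_succ', sum_range_succ' _ (c + 1), mul_sum]
  simp only [Nat.choose_zero_right]
  rw [add_right_comm, ← sum_add_distrib]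
  congr 1
  refine sum_congr rfl fun k _ => ?_
  have h := mul_choose_pred b k
  rw [Nat.choose_succ_succ c k, Nat.factorial_succ, show θ - (k + 1) = θ - 1 - k by omega]
  calc _ = k.factorial * c.choose k * (θ - 1 - k).factorial * (b.choose (k + 1) * (k + 1)) +
        (k + 1) * k.factorial * b.choose (k + 1) * c.choose (k + 1) * (θ - 1 - k).factorial := by
        rw [Nat.succ_eq_add_one]; ring
    _ = _ := by rw [← h]; ring

lemma weylSum_theta (p b q θ : ℕ) (hp : b + p = θ + 1) (hq : q ≤ θ) :
    weylSum p q (θ + 1) = p * weylSum (p - 1) q θ + b * weylSum p q θ := by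
  simp only [weylSum, mul_sum]
  rw [← sum_add_distrib]
  refine sum_congr rfl fun k hk => ?_
  have hkθ : k ≤ θ := by have := mem_range.1 hk; omega
  have h : p * (p - 1).choose k + b * p.choose k = p.choose k * (θ + 1 - k) := by
    rw [mul_choose_pred, Nat.choose_succ_right_eq]
    rcases le_or_gt k p with hkp | hkp
    · rw [show θ + 1 - k = (p - k) + b by omega]
      ring
    · simp [Nat.choose_eq_zero_of_lt hkp]
  rw [show (θ + 1 - k).factorial = (θ + 1 - k) * (θ - k).factorial by
    rw [show θ + 1 - k = (θ - k) + 1 by omega, Nat.factorial_succ]]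
  calc _ = k.factorial * q.choose k * (θ - k).factorial * (p.choose k * (θ + 1 - k)) := by ring
    _ = _ := by rw [← h]; ring

lemma weylSum_self (p θ : ℕ) (hp : p ≤ θ) : weylSum p θ θ = 2 ^ p * θ.factorial := by
  have h : weylSum p θ θ = ∑ k ∈ range (θ + 1), p.choose k * θ.factorial := by
    refine sum_congr rfl fun k hk => ?_
    rw [← Nat.choose_mul_factorial_mul_factorial (Nat.lt_succ_iff.1 (mem_range.1 hk))]
    ring
  rw [h, ← sum_mul, ← Nat.sum_range_choose]
  congr 1
  symm
  refine sum_subset (range_subset_range.2 (by omega)) fun k _ hk => ?_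
  exact Nat.choose_eq_zero_of_lt (by rw [mem_range] at hk; omega)

lemma weylSum_symm (c : ℕ) : ∀ b p q θ : ℕ, b + p = θ → c + q = θ →
    2 ^ p * weylSum b c θ = 2 ^ c * weylSum p q θ := by
  induction c with
  | zero =>
    intro b p q θ hb hc
    obtain rfl : q = θ := by omega
    rw [weylSum_self p q (by omega)]
    simp [weylSum]
  | succ c ih =>
    intro b p q θ hb hc
    obtain ⟨t, rfl⟩ : ∃ t, θ = t + 1 := ⟨c + q, by omega⟩
    have h1 := ih b p (q + 1) (t + 1) hb (by omega)
    have h2 : b * (2 ^ p * weylSum (b - 1) c t) = b * (2 ^ c * weylSum p q t) := by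
      cases b with
      | zero => simp
      | succ b => rw [ih (b + 1 - 1) p q t (by omega) (by omega)]
    have h3 := weylSum_theta p b q t hb (by omega)
    have h4 := weylSum_succ p q (t + 1)
    rw [Nat.add_sub_cancel] at h4
    rw [weylSum_succ, Nat.add_sub_cancel]
    calc _ = 2 ^ p * weylSum b c (t + 1) + b * (2 ^ p * weylSum (b - 1) c t) := by ring
      _ = 2 ^ c * (weylSum p q (t + 1) + (p * weylSum (p - 1) q t + b * weylSum p q t)) := by
        rw [h1, h2, h4]; ring
      _ = _ := by rw [← h3]; ring

lemma sum_Iic_min_eq_weylSum (b c θ : ℕ) :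
    ∑ k ∈ Iic (min b c), k.factorial * b.choose k * c.choose k * (θ - k).factorial =
      weylSum b c θ := by
  refine sum_subset (fun k hk => ?_) fun k hk hk' => ?_
  · simp only [mem_Iic, mem_range] at *; omega
  · simp only [mem_Iic, mem_range] at *
    rw [Nat.choose_eq_zero_of_lt (show b < k by omega)]
    simp

/-- The multi-index sum factors into one-variable sums. -/
lemma sum_Iic_eq_prod_weylSum {n : ℕ} (b c θ : Fin n → ℕ) :
    (∑ γ ∈ Finset.Iic (fun i => min (b i) (c i)),
        ((∏ i, Nat.factorial (γ i) : ℕ) : ℚ) *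
          ((∏ i, Nat.choose (b i) (γ i) : ℕ) : ℚ) *
          ((∏ i, Nat.choose (c i) (γ i) : ℕ) : ℚ) *
          ((∏ i, Nat.factorial (θ i - γ i) : ℕ) : ℚ)) =
      ∏ i, (weylSum (b i) (c i) (θ i) : ℚ) := by
  have hI : Finset.Iic (fun i => min (b i) (c i)) =
      Fintype.piFinset fun i => Finset.Iic (min (b i) (c i)) := by
    ext γ
    simp only [mem_Iic, Fintype.mem_piFinset, Pi.le_def]
  simp_rw [← sum_Iic_min_eq_weylSum]
  rw [← Nat.cast_prod, prod_univ_sum, hI]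
  push_cast
  simp only [prod_mul_distrib]

/-- Symmetry `(X,Y) = 2^{l(Y)} (Y,X)` of the Frobenius form on Weyl monomials
`X = x^α ∂^β`, `Y = x^{α'} ∂^{β'}` with `α + α' = β + β' = θ`. -/
theorem frobenius_symm_pow_two {n : ℕ} (α β α' β' θ : Fin n → ℕ)
    (hα : α + α' = θ) (hβ : β + β' = θ) :
    (∑ γ ∈ Finset.Iic (fun i => min (β i) (α' i)),
        ((∏ i, Nat.factorial (γ i) : ℕ) : ℚ) *
          ((∏ i, Nat.choose (β i) (γ i) : ℕ) : ℚ) *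
          ((∏ i, Nat.choose (α' i) (γ i) : ℕ) : ℚ) *
          ((∏ i, Nat.factorial (θ i - γ i) : ℕ) : ℚ)) =
      (2 : ℚ) ^ ((∑ i, (α' i : ℤ)) - ∑ i, (β' i : ℤ)) *
      (∑ γ ∈ Finset.Iic (fun i => min (β' i) (α i)),
        ((∏ i, Nat.factorial (γ i) : ℕ) : ℚ) *
          ((∏ i, Nat.choose (β' i) (γ i) : ℕ) : ℚ) *
          ((∏ i, Nat.choose (α i) (γ i) : ℕ) : ℚ) *
          ((∏ i, Nat.factorial (θ i - γ i) : ℕ) : ℚ)) := by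
  rw [sum_Iic_eq_prod_weylSum, sum_Iic_eq_prod_weylSum, zpow_sub₀ two_ne_zero, div_mul_eq_mul_div,
    eq_div_iff (by positivity), mul_comm]
  simp_rw [← Nat.cast_sum, zpow_natCast, ← prod_pow_eq_pow_sum, ← prod_mul_distrib]
  refine prod_congr rfl fun i _ => ?_
  have h := weylSum_symm (α' i) (β i) (β' i) (α i) (θ i) (congrFun hβ i)
    (by rw [add_comm]; exact congrFun hα i)
  exact_mod_cast h
end

section
/- Let α, β, α', β', θ : Fin n → ℕ satisfy α + α' = β + β' = θ (componentwise). Then in ℝ: (√2)^{(||α|| − ||β|| : ℤ)} · Σ_γ γ! · C(β,γ) · C(α',γ) · (θ−γ)! = (√2)^{(||α'|| − ||β'|| : ℤ)} · Σ_γ γ! · C(β',γ) · C(α,γ) · (θ−γ)!, where on the left γ ranges over multi-indices with γ_i ≤ min(β_i, α'_i) and on the right over those with γ_i ≤ min(β'_i, α_i). (This is the symmetry √2^{l(X)}(X,Y) = √2^{l(Y)}(Y,X) of the Frobenius form on Weyl monomials X = x^α∂^β, Y = x^{α'}∂^{β'}.) -/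
/-!
The identity factors over the coordinates, so everything reduces to a statement about one
variable: with `a + a' = b + b'` and
`f(p, q) = ∑ γ, γ! C(p,γ) C(q,γ) (a + a' - γ)!`, one has `2^a f(b, a') = 2^b f(b', a)`.
(This is Euler's transformation of `₂F₁(-b, -a'; -(a+a'); z)` at `z = -1`.)

Expanding `2 + X = 1 + (1 + X)` shows that `f(b, a') = a! a'! c(b', b, a)`, where `c(u, p, m)` is
the coefficient of `X^m` in `P(u, p) = (1 + X)^u (2 + X)^p` (`frob_eq`). The substitution
`X ↦ 2 / X` gives `X^(u+p) P(u, p)(2 / X) = 2^p P(p, u)`, that is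
`2^m c(u, p, m) = 2^p c(p, u, u + p - m)` (`two_pow_mul_coef`), which is the one-variable claim.
The powers of `√2` come from `a - b = -(a' - b')`.
-/

open Finset

open Polynomial in
/-- The coefficient of `X^m` in `(1 + X)^u (2 + X)^p`. -/
noncomputable def coef (u p m : ℕ) : ℕ := (((1 + X) ^ u * (2 + X) ^ p : ℕ[X])).coeff m

open Polynomial in
theorem coef_eq_sum (u p m : ℕ) :
    coef u p m = ∑ γ ∈ range (p + 1), p.choose γ * (u + p - γ).choose m := by
  have h : ((1 + X) ^ u * (2 + X) ^ p : ℕ[X])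
      = ∑ γ ∈ range (p + 1), C (p.choose γ) * (1 + X) ^ (u + p - γ) := by
    have h2 : (2 + X : ℕ[X]) = 1 + (1 + X) := by ring
    rw [h2, add_pow 1 (1 + X) p, mul_sum]
    refine sum_congr rfl fun γ hγ => ?_
    have : u + p - γ = u + (p - γ) := by have := mem_range.1 hγ; omega
    rw [this, pow_add]
    simp only [one_pow, one_mul, eq_natCast]
    ring
  rw [coef, h, finsetSum_coeff]
  refine sum_congr rfl fun γ _ => ?_
  rw [coeff_C_mul, coeff_one_add_X_pow, Nat.cast_id]

open Polynomial in
theorem coef_left_succ (u p m : ℕ) :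
    coef (u + 1) p (m + 1) = coef u p (m + 1) + coef u p m := by
  have : ((1 + X) ^ (u + 1) * (2 + X) ^ p : ℕ[X])
    = (1 + X) ^ u * (2 + X) ^ p + (1 + X) ^ u * (2 + X) ^ p * X := by ring
  rw [coef, this, coeff_add, coeff_mul_X]; rfl

open Polynomial in
theorem coef_right_succ (u p m : ℕ) :
    coef u (p + 1) (m + 1) = 2 * coef u p (m + 1) + coef u p m := by
  have : ((1 + X) ^ u * (2 + X) ^ (p + 1) : ℕ[X])
    = C 2 * ((1 + X) ^ u * (2 + X) ^ p) + (1 + X) ^ u * (2 + X) ^ p * X := by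
    rw [show (C 2 : ℕ[X]) = 2 from rfl]; ring
  rw [coef, this, coeff_add, coeff_mul_X, coeff_C_mul]; rfl

open Polynomial in
theorem coef_zero (u p : ℕ) : coef u p 0 = 2 ^ p := by
  simp [coef, coeff_zero_eq_eval_zero]

theorem coef_top (u p : ℕ) : coef u p (u + p) = 1 := by
  rw [coef_eq_sum, sum_eq_single 0]
  · simp
  · intro γ _ h0
    by_cases hup : u + p = 0
    · rw [Nat.choose_eq_zero_of_lt (by omega), zero_mul]
    · rw [Nat.choose_eq_zero_of_lt (n := u + p - γ) (by omega), mul_zero]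
  · simp

/-- The symmetry of `(1 + X)^u (2 + X)^p` under `X ↦ 2 / X`, read off on coefficients. -/
theorem two_pow_mul_coef (u p m q : ℕ) (h : m + q = u + p) :
    2 ^ m * coef u p m = 2 ^ p * coef p u q := by
  induction u generalizing p m q with
  | zero =>
    induction p generalizing m q with
    | zero =>
      obtain ⟨rfl, rfl⟩ : m = 0 ∧ q = 0 := by omega
      rfl
    | succ p ih =>
      rcases m with _ | m
      · obtain rfl : q = p + 1 + 0 := by omega
        rw [coef_zero, coef_top]; simp
      rcases q with _ | q
      · obtain rfl : m = p := by omega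
        have := coef_top 0 (m + 1)
        rw [zero_add] at this
        rw [this, coef_zero, pow_zero]
      rw [coef_right_succ, coef_left_succ, mul_add, mul_add, pow_succ 2 p,
        mul_assoc (2 ^ p) 2 (coef p 0 (q + 1)), mul_assoc (2 ^ p) 2]
      have h1 := ih (m + 1) q (by omega)
      have h2 := ih m (q + 1) (by omega)
      rw [pow_succ] at h1 ⊢
      linear_combination 2 * h1 + 2 * h2
  | succ u ih =>
    rcases m with _ | m
    · obtain rfl : q = p + (u + 1) := by omega
      rw [coef_zero, coef_top]; simp
    rcases q with _ | q
    · obtain h' : m + 1 = u + 1 + p := by omega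
      rw [h', coef_top, coef_zero, ← pow_add, mul_one, add_comm]
    rw [coef_left_succ, coef_right_succ]
    have h1 := ih p (m + 1) q (by omega)
    have h2 := ih p m (q + 1) (by omega)
    rw [pow_succ] at h1 ⊢
    linear_combination h1 + 2 * h2

/-- The Frobenius form `(x^a ∂^b, x^a' ∂^b')` in one variable, where `t = a + a' = b + b'`; it
depends only on `b`, `a'` and `t`. -/
def frob (b a' t : ℕ) : ℕ :=
  ∑ γ ∈ Iic (min b a'), γ.factorial * b.choose γ * a'.choose γ * (t - γ).factorial

theorem frob_eq (a a' b b' : ℕ) (h : a + a' = b + b') :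
    frob b a' (a + a') = a.factorial * a'.factorial * coef b' b a := by
  rw [coef_eq_sum, mul_sum, frob]
  have hsub : Iic (min b a') ⊆ range (b + 1) := by
    intro γ hγ
    simp only [mem_Iic, mem_range] at *
    omega
  rw [← sum_subset hsub]
  · refine sum_congr rfl fun γ hγ => ?_
    have hγ' : γ ≤ a' := (mem_Iic.1 hγ).trans (min_le_right _ _)
    rw [show b' + b - γ = a + a' - γ by omega]
    have h1 := Nat.choose_mul_factorial_mul_factorial hγ'
    have h2 := Nat.choose_mul_factorial_mul_factorial (n := a + a' - γ) (k := a) (by omega)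
    rw [show a + a' - γ - a = a' - γ by omega] at h2
    rw [← h1, ← h2]
    ring
  · intro γ h1 h2
    simp only [mem_Iic, mem_range] at h1 h2
    rw [Nat.choose_eq_zero_of_lt (n := b' + b - γ) (by omega)]
    simp

theorem two_pow_mul_frob (a a' b b' : ℕ) (h : a + a' = b + b') :
    2 ^ a * frob b a' (a + a') = 2 ^ b * frob b' a (a + a') := by
  have h2 := frob_eq a' a b' b (by omega)
  rw [add_comm a' a] at h2
  rw [frob_eq a a' b b' h, h2]
  have := two_pow_mul_coef b' b a a' (by omega)
  linear_combination (a.factorial * a'.factorial) * this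

/-- The Frobenius form in `n` variables is the product of the one-variable forms. -/
theorem sum_eq_prod_frob {n : ℕ} (b a' t : Fin n → ℕ) :
    (∑ γ ∈ Finset.Iic (fun i => min (b i) (a' i)),
        ((∏ i, Nat.factorial (γ i) : ℕ) : ℝ) *
          ((∏ i, Nat.choose (b i) (γ i) : ℕ) : ℝ) *
          ((∏ i, Nat.choose (a' i) (γ i) : ℕ) : ℝ) *
          ((∏ i, Nat.factorial (t i - γ i) : ℕ) : ℝ))
      = ((∏ i, frob (b i) (a' i) (t i) : ℕ) : ℝ) := by
  have hI : Finset.Iic (fun i => min (b i) (a' i))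
      = Fintype.piFinset fun i => Iic (min (b i) (a' i)) := by
    ext γ
    simp only [mem_Iic, Fintype.mem_piFinset, Pi.le_def]
  simp only [frob]
  rw [prod_univ_sum, hI, Nat.cast_sum]
  refine sum_congr rfl fun γ _ => ?_
  simp only [prod_mul_distrib, Nat.cast_mul]

/-- Symmetry `√2^{l(X)} (X,Y) = √2^{l(Y)} (Y,X)` of the Frobenius form on Weyl
monomials `X = x^α ∂^β`, `Y = x^{α'} ∂^{β'}` with `α + α' = β + β' = θ`. -/
theorem frobenius_symm_sqrt_two {n : ℕ} (α β α' β' θ : Fin n → ℕ)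
    (hα : α + α' = θ) (hβ : β + β' = θ) :
    (Real.sqrt 2) ^ ((∑ i, (α i : ℤ)) - ∑ i, (β i : ℤ)) *
      (∑ γ ∈ Finset.Iic (fun i => min (β i) (α' i)),
        ((∏ i, Nat.factorial (γ i) : ℕ) : ℝ) *
          ((∏ i, Nat.choose (β i) (γ i) : ℕ) : ℝ) *
          ((∏ i, Nat.choose (α' i) (γ i) : ℕ) : ℝ) *
          ((∏ i, Nat.factorial (θ i - γ i) : ℕ) : ℝ)) =
    (Real.sqrt 2) ^ ((∑ i, (α' i : ℤ)) - ∑ i, (β' i : ℤ)) *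
      (∑ γ ∈ Finset.Iic (fun i => min (β' i) (α i)),
        ((∏ i, Nat.factorial (γ i) : ℕ) : ℝ) *
          ((∏ i, Nat.choose (β' i) (γ i) : ℕ) : ℝ) *
          ((∏ i, Nat.choose (α i) (γ i) : ℕ) : ℝ) *
          ((∏ i, Nat.factorial (θ i - γ i) : ℕ) : ℝ)) := by
  rw [sum_eq_prod_frob, sum_eq_prod_frob]
  have hα' : ∀ i, α i + α' i = θ i := fun i => congrFun hα i
  have hβ' : ∀ i, β i + β' i = θ i := fun i => congrFun hβ i
  have key : 2 ^ (∑ i, α i) * ∏ i, frob (β i) (α' i) (θ i)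
      = 2 ^ (∑ i, β i) * ∏ i, frob (β' i) (α i) (θ i) := by
    rw [← prod_pow_eq_pow_sum, ← prod_pow_eq_pow_sum, ← prod_mul_distrib, ← prod_mul_distrib]
    refine prod_congr rfl fun i _ => ?_
    rw [← hα' i]
    exact two_pow_mul_frob _ _ _ _ ((hα' i).trans (hβ' i).symm)
  have hexp : (∑ i, (α' i : ℤ)) - ∑ i, (β' i : ℤ) = (∑ i, (β i : ℤ)) - ∑ i, (α i : ℤ) := by
    rw [sub_eq_sub_iff_add_eq_add, ← sum_add_distrib, ← sum_add_distrib]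
    refine sum_congr rfl fun i _ => ?_
    have := hα' i
    have := hβ' i
    omega
  rw [hexp]
  have keyR := congrArg (Nat.cast (R := ℝ)) key
  rw [Nat.cast_mul, Nat.cast_mul, Nat.cast_pow, Nat.cast_pow, Nat.cast_ofNat] at keyR
  have hs : (Real.sqrt 2) ≠ 0 := by positivity
  have hsq : (Real.sqrt 2) ^ 2 = 2 := Real.sq_sqrt (by norm_num)
  rw [← Nat.cast_sum, ← Nat.cast_sum, zpow_sub₀ hs, zpow_sub₀ hs]
  simp only [zpow_natCast]
  generalize (∑ i, α i) = A at *
  generalize (∑ i, β i) = B at *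
  rw [← hsq, ← pow_mul, ← pow_mul, mul_comm 2 A, mul_comm 2 B, pow_mul, pow_mul] at keyR
  field_simp
  linear_combination keyR
end

section
/- Let a, b, k ∈ ℕ and define η^{(a,b)}_{i,j} = Σ_{m=0}^{b+i} (b+i choose m)·(b+j choose m)·m!·(a+b+i+j−m)! for 0 ≤ i,j ≤ k. Then the real symmetric (k+1)×(k+1) matrix (η^{(a,b)}_{i,j})_{0≤i,j≤k} is positive definite: for every λ : Fin (k+1) → ℝ, Σ_{i,j} λ_i · λ_j · η^{(a,b)}_{i,j} ≥ 0, and this sum equals 0 only if λ = 0. (This is the positive definiteness of the Euclid scalar product ⟨·,·⟩ on the weight-homogeneous subspace of A_1 spanned by x^{a+i}∂^{b+i}, 0 ≤ i ≤ k, since ⟨x^{a+i}∂^{b+i}, x^{a+j}∂^{b+j}⟩ = √2^{a−b}·η^{(a,b)}_{i,j}.) -/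
/-!
On monomials `x ^ n` the operator `x ^ r ∂ ^ r` acts with eigenvalue the falling factorial
`n (n - 1) ⋯ (n - r + 1)`, and the functional sending each `x ^ r ∂ ^ r` to `r!` is the expectation
for the geometric weights `2 ^ (-n - 1)`, since `∑ n, n.descFactorial r / 2 ^ (n + 1) = r!`
(`hasSum_descFactorial_geometric`). Evaluating `x ^ (a + i) ∂ ^ (b + i) x ^ (b + j) ∂ ^ (a + j)` on
`x ^ (a + u)` (`descFactorial_mul_descFactorial`, `descFactorial_product_shift`) therefore gives
`η i j = ∑ u, w u * (b + u).descFactorial (b + i) * (b + u).descFactorial (b + j)`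
with positive weights `w u = (a + u)! / ((b + u)! * 2 ^ (a + u + 1))` (`hasSum_eta`).

So the quadratic form is `∑ u, w u * P u ^ 2` with
`P u = ∑ i, lam i * (b + u).descFactorial (b + i)`. It is nonnegative, and if it vanishes then so
does every `P u`; this system is triangular with nonzero diagonal, as
`(b + u).descFactorial (b + i) = 0` for `u < i`, whence `lam = 0`.
-/

open Finset

/-- The linearization formula for products of falling factorials, a form of Vandermonde's
identity. -/
lemma descFactorial_mul_descFactorial (t p q : ℕ) :
    t.descFactorial p * t.descFactorial q =
      ∑ m ∈ range (p + 1), p.choose m * q.choose m * m.factorial * t.descFactorial (p + q - m) := by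
  rcases lt_or_ge t q with h | h
  · rw [Nat.descFactorial_eq_zero_iff_lt.2 h, mul_zero]
    symm
    apply Finset.sum_eq_zero
    intro m hm
    rw [mem_range] at hm
    rw [Nat.descFactorial_eq_zero_iff_lt.2 (by omega : t < p + q - m), mul_zero]
  · obtain ⟨s, rfl⟩ := Nat.exists_eq_add_of_le h
    rw [Nat.descFactorial_eq_factorial_mul_choose (q + s) p, Nat.add_choose_eq,
      Finset.Nat.sum_antidiagonal_eq_sum_range_succ_mk, Finset.mul_sum, Finset.sum_mul]
    apply Finset.sum_congr rfl
    intro m hm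
    have hm : m ≤ p := by rw [mem_range] at hm; omega
    have h1 : (q + s).descFactorial (p + q - m)
        = s.descFactorial (p - m) * (q + s).descFactorial q := by
      have := Nat.descFactorial_mul_descFactorial (n := q + s) (k := q) (m := p + q - m) (by omega)
      rw [← this]
      congr 2 <;> omega
    rw [h1, Nat.descFactorial_eq_factorial_mul_choose s,
      ← Nat.choose_mul_factorial_mul_factorial hm]
    ring

lemma descFactorial_mul_factorial_shift (a b u r : ℕ) :
    (b + u).descFactorial (b + r) * (a + u).factorial =
      (b + u).factorial * (a + u).descFactorial (a + r) := by
  rcases lt_or_ge u r with h | h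
  · rw [Nat.descFactorial_eq_zero_iff_lt.2 (by omega : b + u < b + r),
      Nat.descFactorial_eq_zero_iff_lt.2 (by omega : a + u < a + r)]
    simp
  · rw [← Nat.factorial_mul_descFactorial (by omega : b + r ≤ b + u),
      ← Nat.factorial_mul_descFactorial (by omega : a + r ≤ a + u),
      show b + u - (b + r) = u - r by omega, show a + u - (a + r) = u - r by omega]
    ring

/-- The eigenvalue of `x ^ (a + i) ∂ ^ (b + i) x ^ (b + j) ∂ ^ (a + j)` on `x ^ (a + u)`, computed
through its normally ordered form; both sides are multiplied by `(b + u)!`. -/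
lemma descFactorial_product_shift (a b i j u : ℕ) :
    (b + u).descFactorial (b + i) * (b + u).descFactorial (b + j) * (a + u).factorial =
      (b + u).factorial * ∑ m ∈ range (b + i + 1), (b + i).choose m * (b + j).choose m *
        m.factorial * (a + u).descFactorial (a + b + i + j - m) := by
  rw [descFactorial_mul_descFactorial, Finset.sum_mul, Finset.mul_sum]
  apply Finset.sum_congr rfl
  intro m hm
  rw [mem_range] at hm
  have := descFactorial_mul_factorial_shift a b u (b + i + j - m)
  rw [show b + (b + i + j - m) = b + i + (b + j) - m by omega,
    show a + (b + i + j - m) = a + b + i + j - m by omega] at this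
  rw [mul_assoc, this]
  ring

/-- The `r`-th factorial moment of the geometric distribution `2 ^ (-n - 1)` is `r!`. The first
`a ≤ r` terms of the series vanish and are omitted. -/
lemma hasSum_descFactorial_geometric (a r : ℕ) (h : a ≤ r) :
    HasSum (fun u : ℕ => ((a + u).descFactorial r : ℝ) / 2 ^ (a + u + 1)) (r.factorial : ℝ) := by
  obtain ⟨d, rfl⟩ := Nat.exists_eq_add_of_le h
  have key := (hasSum_choose_mul_geometric_of_norm_lt_one (𝕜 := ℝ) (a + d) (r := 1 / 2)
    (by norm_num)).mul_left (((a + d).factorial : ℝ) / 2 ^ (a + d + 1))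
  rw [← hasSum_nat_add_iff' d]
  have h0 : ∑ u ∈ range d, ((a + u).descFactorial (a + d) : ℝ) / 2 ^ (a + u + 1) = 0 := by
    apply Finset.sum_eq_zero
    intro u hu
    rw [mem_range] at hu
    rw [Nat.descFactorial_eq_zero_iff_lt.2 (by omega)]
    simp
  rw [h0, sub_zero]
  convert key using 1
  · rfl
  · funext n
    rw [show a + (n + d) = n + (a + d) by ring, Nat.descFactorial_eq_factorial_mul_choose]
    push_cast
    rw [one_div, inv_pow]
    field_simp
    ring
  · rw [show (1 - 1 / 2 : ℝ) = 2⁻¹ by norm_num, inv_pow]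
    field_simp

lemma hasSum_eta (a b i j : ℕ) :
    HasSum (fun u : ℕ => ((a + u).factorial : ℝ) / ((b + u).factorial * 2 ^ (a + u + 1)) *
        ((b + u).descFactorial (b + i) * (b + u).descFactorial (b + j)))
      ((∑ m ∈ range (b + i + 1), (b + i).choose m * (b + j).choose m *
        m.factorial * (a + b + i + j - m).factorial : ℕ) : ℝ) := by
  push_cast
  have key := hasSum_sum (s := range (b + i + 1)) (fun m hm =>
    (hasSum_descFactorial_geometric a (a + b + i + j - m)
      (by rw [mem_range] at hm; omega)).mul_left
        (((b + i).choose m : ℝ) * (b + j).choose m * m.factorial))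
  convert key using 1
  · rfl
  funext u
  have h := congrArg (Nat.cast (R := ℝ)) (descFactorial_product_shift a b i j u)
  push_cast at h
  have hb : ((b + u).factorial : ℝ) ≠ 0 := by positivity
  simp only [← mul_div_assoc]
  rw [← Finset.sum_div, div_mul_eq_mul_div, div_eq_div_iff (by positivity) (by positivity)]
  linear_combination (2 : ℝ) ^ (a + u + 1) * h

/-- The matrix `η^{(a,b)}_{i,j} = Σ_{m=0}^{b+i} C(b+i,m) C(b+j,m) m! (a+b+i+j-m)!`
is positive definite: the quadratic form it defines on `ℝ^{k+1}` is nonnegative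
and vanishes only at `0`. -/
theorem eta_matrix_posDef (a b k : ℕ) (lam : Fin (k + 1) → ℝ) :
    0 ≤ (∑ i : Fin (k + 1), ∑ j : Fin (k + 1), lam i * lam j *
        ((∑ m ∈ Finset.range (b + (i : ℕ) + 1),
          Nat.choose (b + (i : ℕ)) m * Nat.choose (b + (j : ℕ)) m *
            Nat.factorial m * Nat.factorial (a + b + (i : ℕ) + (j : ℕ) - m) : ℕ) : ℝ)) ∧
    ((∑ i : Fin (k + 1), ∑ j : Fin (k + 1), lam i * lam j *
        ((∑ m ∈ Finset.range (b + (i : ℕ) + 1),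
          Nat.choose (b + (i : ℕ)) m * Nat.choose (b + (j : ℕ)) m *
            Nat.factorial m * Nat.factorial (a + b + (i : ℕ) + (j : ℕ) - m) : ℕ) : ℝ)) = 0 →
      lam = 0) := by
  have key := hasSum_sum (s := (univ : Finset (Fin (k + 1)))) (fun i _ =>
    hasSum_sum (s := (univ : Finset (Fin (k + 1)))) (fun j _ =>
      (hasSum_eta a b i j).mul_left (lam i * lam j)))
  have hsq : (fun u : ℕ => ∑ i : Fin (k + 1), ∑ j : Fin (k + 1), lam i * lam j *
      (((a + u).factorial : ℝ) / ((b + u).factorial * 2 ^ (a + u + 1)) *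
        ((b + u).descFactorial (b + i) * (b + u).descFactorial (b + j)))) =
      fun u : ℕ => ((a + u).factorial : ℝ) / ((b + u).factorial * 2 ^ (a + u + 1)) *
        (∑ i : Fin (k + 1), lam i * ((b + u).descFactorial (b + i) : ℝ)) ^ 2 := by
    funext u
    rw [sq, Finset.sum_mul_sum, Finset.mul_sum]
    refine Finset.sum_congr rfl fun i _ => ?_
    rw [Finset.mul_sum]
    refine Finset.sum_congr rfl fun j _ => ?_
    ring
  rw [hsq] at key
  have hnn : ∀ u : ℕ, 0 ≤ ((a + u).factorial : ℝ) / ((b + u).factorial * 2 ^ (a + u + 1)) *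
      (∑ i : Fin (k + 1), lam i * ((b + u).descFactorial (b + i) : ℝ)) ^ 2 :=
    fun u => by positivity
  refine ⟨key.nonneg hnn, fun h0 => ?_⟩
  rw [h0] at key
  have hP : ∀ u : ℕ, ∑ i : Fin (k + 1), lam i * ((b + u).descFactorial (b + i) : ℝ) = 0 := by
    intro u
    have hu := congrFun ((hasSum_zero_iff_of_nonneg hnn).1 key) u
    have hw : ((a + u).factorial : ℝ) / ((b + u).factorial * 2 ^ (a + u + 1)) ≠ 0 := by
      positivity
    exact pow_eq_zero_iff (two_ne_zero) |>.1 ((mul_eq_zero.1 hu).resolve_left hw)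
  have hlam : ∀ n : ℕ, ∀ hn : n < k + 1, lam ⟨n, hn⟩ = 0 := by
    intro n
    induction n using Nat.strong_induction_on with
    | _ n ih =>
      intro hn
      have hs := hP n
      rw [Finset.sum_eq_single_of_mem ⟨n, hn⟩ (mem_univ _)] at hs
      · refine (mul_eq_zero.1 hs).resolve_right ?_
        rw [Nat.descFactorial_self]
        positivity
      · intro i _ hi
        rcases lt_trichotomy (i : ℕ) n with h | h | h
        · rw [show lam i = 0 from ih i h i.2, zero_mul]
        · exact absurd (Fin.ext h) hi
        · rw [Nat.descFactorial_eq_zero_iff_lt.2 (by omega)]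
          simp
  funext i
  exact hlam i i.2
end

section
/- Let α, β, α', β', θ : Fin n → ℕ satisfy α + α' = θ and β + β' = θ (componentwise). Then in ℚ: Σ_γ γ! · C(β,γ) · C(α',γ) · (θ−γ)! = θ! · Σ_γ C(θ−γ, α) · C(β,γ) / C(θ,α), where γ ranges over multi-indices with γ_i ≤ min(β_i, α'_i) on the left and γ_i ≤ β_i on the right, and γ! = ∏_i γ_i!, θ! = ∏_i θ_i!, C(α,β) = ∏_i (α_i choose β_i). (This computes the Frobenius form (x^α∂^β, x^{α'}∂^{β'}).) -/
open Finset

/-!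
The identity holds term by term. Since `θ = α + α'`, for `γ ≤ α'` both
`γ! C(α',γ) (θ-γ)!` and `θ! C(θ-γ,α) / C(θ,α)` equal `α'! (θ-γ)! / (α'-γ)!`. For `γ ≤ β` with
`γ_i > α'_i` for some `i`, both sides vanish, so the left-hand sum may be extended to all `γ ≤ β`.
-/

/-- The one-variable identity between summands, with the denominator `C(θ,a)` cleared and
`θ = a + a'`. The hypothesis `g ≤ a + a'` matters: for larger `g` and `a = 0` the truncated
difference makes the right-hand side nonzero. -/
lemma summand_identity (a a' g : ℕ) (hg : g ≤ a + a') :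
    g.factorial * a'.choose g * (a + a' - g).factorial * (a + a').choose a =
      (a + a').factorial * (a + a' - g).choose a := by
  rcases le_or_gt g a' with h | h
  · obtain ⟨k, rfl⟩ := Nat.exists_eq_add_of_le h
    have e : a + (g + k) - g = a + k := by omega
    rw [e]
    have h1 := Nat.add_choose_mul_factorial_mul_factorial g k
    have h2 := Nat.add_choose_mul_factorial_mul_factorial a (g + k)
    have h3 := Nat.add_choose_mul_factorial_mul_factorial a k
    rw [← h2, ← h1, ← h3, Nat.choose_symm_add (a := g) (b := k),
      Nat.choose_symm_add (a := a) (b := k), Nat.choose_symm_add (a := a) (b := g + k)]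
    ring
  · rw [Nat.choose_eq_zero_of_lt h, Nat.choose_eq_zero_of_lt (by omega : a + a' - g < a)]
    simp

/-- Value of the Frobenius form on Weyl monomials:
`(x^α ∂^β, x^{α'} ∂^{β'}) = Σ_γ γ! C(β,γ) C(α',γ) (θ-γ)! = θ! Σ_γ C(θ-γ,α) C(β,γ) / C(θ,α)`
when `α + α' = β + β' = θ`. -/
theorem frobenius_form_value {n : ℕ} (α β α' β' θ : Fin n → ℕ)
    (hα : α + α' = θ) (hβ : β + β' = θ) :
    (∑ γ ∈ Finset.Iic (fun i => min (β i) (α' i)),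
        ((∏ i, Nat.factorial (γ i) : ℕ) : ℚ) *
          ((∏ i, Nat.choose (β i) (γ i) : ℕ) : ℚ) *
          ((∏ i, Nat.choose (α' i) (γ i) : ℕ) : ℚ) *
          ((∏ i, Nat.factorial (θ i - γ i) : ℕ) : ℚ)) =
      ((∏ i, Nat.factorial (θ i) : ℕ) : ℚ) *
        ∑ γ ∈ Finset.Iic β,
          ((∏ i, Nat.choose (θ i - γ i) (α i) : ℕ) : ℚ) *
            ((∏ i, Nat.choose (β i) (γ i) : ℕ) : ℚ) /
              ((∏ i, Nat.choose (θ i) (α i) : ℕ) : ℚ) := by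
  subst hα
  have hsub : Finset.Iic (fun i => min (β i) (α' i)) ⊆ Finset.Iic β := by
    intro γ hγ
    rw [Finset.mem_Iic] at hγ ⊢
    exact fun i => (hγ i).trans (min_le_left _ _)
  rw [Finset.sum_subset hsub, Finset.mul_sum]
  · refine Finset.sum_congr rfl fun γ hγ => ?_
    rw [Finset.mem_Iic] at hγ
    have hC : ((∏ i, Nat.choose ((α + α') i) (α i) : ℕ) : ℚ) ≠ 0 := by
      refine Nat.cast_ne_zero.mpr (Finset.prod_ne_zero_iff.mpr fun i _ => ?_)
      exact (Nat.choose_pos (Nat.le_add_right _ _)).ne'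
    rw [← mul_div_assoc, eq_div_iff hC]
    have key : (∏ i, (γ i).factorial) * (∏ i, (α' i).choose (γ i)) *
        (∏ i, ((α + α') i - γ i).factorial) * (∏ i, ((α + α') i).choose (α i)) =
        (∏ i, ((α + α') i).factorial) * ∏ i, ((α + α') i - γ i).choose (α i) := by
      simp only [← Finset.prod_mul_distrib]
      refine Finset.prod_congr rfl fun i _ => summand_identity _ _ _ ?_
      have h1 : γ i ≤ β i := hγ i
      have h2 : β i + β' i = α i + α' i := congrFun hβ i
      omega
    have keyQ := congrArg (Nat.cast : ℕ → ℚ) key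
    rw [Nat.cast_mul, Nat.cast_mul, Nat.cast_mul, Nat.cast_mul] at keyQ
    linear_combination ((∏ i, Nat.choose (β i) (γ i) : ℕ) : ℚ) * keyQ
  · intro γ hγ hγ'
    rw [Finset.mem_Iic] at hγ hγ'
    obtain ⟨i, hi⟩ : ∃ i, α' i < γ i := by
      by_contra! hc
      exact hγ' fun i => le_min (hγ i) (hc i)
    rw [Finset.prod_eq_zero (f := fun i => (α' i).choose (γ i)) (Finset.mem_univ i)
      (Nat.choose_eq_zero_of_lt hi)]
    simp
end

section
/- For all n, a, b ∈ ℕ: Σ_{i=0}^{n} 2^a · (n choose b)·(b choose i)·(n−i choose a) = Σ_{i=0}^{n} 2^b · (n choose a)·(a choose i)·(n−i choose b). -/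
open Finset

/-!
Assume `a, b ≤ n`; otherwise both sides vanish. Comparing the coefficients of `X ^ a` in
`∑ i, C(b,i) (1+X)^(n-i) = (1+X)^(n-b) (2+X)^b` gives
`∑ i, C(b,i) C(n-i,a) = ∑ k, 2^(b-k) C(b,k) C(n-b,a-k)`, so that the left side of the theorem is
`∑ k, 2^(a+b-k) C(n,b) C(b,k) C(n-b,a-k)`. For `k ≤ a, b` the product of the three binomials is
the multinomial coefficient `n! / (k! (b-k)! (a-k)! (n-a-b+k)!)`, which is symmetric in `a`
and `b`.
-/

/-- The coefficient of `X ^ a` in `∑ i, C(b,i) (1+X)^(m+b-i) = (2+X)^b (1+X)^m`. -/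
lemma sum_choose_mul_choose_sub (m a b : ℕ) :
    ∑ i ∈ range (m + b + 1), b.choose i * (m + b - i).choose a =
      ∑ k ∈ range (a + 1), 2 ^ (b - k) * b.choose k * m.choose (a - k) := by
  have key : ∑ i ∈ range (b + 1),
      (b.choose i : Polynomial ℕ) * (1 + Polynomial.X) ^ (m + b - i) =
      (Polynomial.X + Polynomial.C 2) ^ b * (1 + Polynomial.X) ^ m := by
    have h2 : (Polynomial.X + Polynomial.C 2 : Polynomial ℕ) = 1 + (1 + Polynomial.X) := by
      rw [show (2 : ℕ) = 1 + 1 from rfl, Polynomial.C_add, Polynomial.C_1]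
      ring
    rw [h2, add_pow, sum_mul]
    refine sum_congr rfl fun i hi => ?_
    have hi' : i ≤ b := Nat.lt_succ_iff.mp (mem_range.mp hi)
    rw [show m + b - i = (b - i) + m by omega, pow_add, one_pow]
    ring
  have hc := congrArg (fun p => Polynomial.coeff p a) key
  simp only [Polynomial.finsetSum_coeff, Polynomial.coeff_natCast_mul,
    Polynomial.coeff_one_add_X_pow, Nat.cast_id] at hc
  rw [Polynomial.coeff_mul, Nat.sum_antidiagonal_eq_sum_range_succ_mk] at hc
  simp only [Polynomial.coeff_X_add_C_pow, Polynomial.coeff_one_add_X_pow, Nat.cast_id] at hc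
  refine Eq.trans ?_ hc
  symm
  refine sum_subset (range_subset_range.mpr (by omega)) fun i _ hi => ?_
  rw [Nat.choose_eq_zero_of_lt (by simpa using hi), zero_mul]

lemma choose_mul_choose_sub_comm (N p q : ℕ) :
    N.choose p * (N - p).choose q = N.choose q * (N - q).choose p := by
  have h1 := Nat.choose_mul (n := N) (k := p + q) (s := p) (by omega)
  have h2 := Nat.choose_mul (n := N) (k := p + q) (s := q) (by omega)
  rw [Nat.add_sub_cancel_left] at h1
  rw [Nat.add_sub_cancel] at h2
  rw [← h1, ← h2, Nat.choose_symm_add]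

/-- Both sides are the multinomial coefficient `n! / (k! (b-k)! (a-k)! (n-a-b+k)!)`. -/
lemma trinomial_symm (n a b k : ℕ) (ha : k ≤ a) (hb : k ≤ b) :
    n.choose b * b.choose k * (n - b).choose (a - k) =
      n.choose a * a.choose k * (n - a).choose (b - k) := by
  rw [Nat.choose_mul hb, Nat.choose_mul ha, mul_assoc, mul_assoc]
  have h := choose_mul_choose_sub_comm (n - k) (b - k) (a - k)
  rw [show n - k - (b - k) = n - b by omega, show n - k - (a - k) = n - a by omega] at h
  rw [h]

/-- For `b ≤ n`, one side of the identity in a form whose terms are symmetric in `a` and `b`. -/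
lemma side_eq (n a b : ℕ) (hb : b ≤ n) :
    (∑ i ∈ range (n + 1), 2 ^ a * n.choose b * b.choose i * (n - i).choose a) =
      ∑ k ∈ range (min a b + 1),
        2 ^ (a + b - k) * (n.choose b * b.choose k * (n - b).choose (a - k)) := by
  obtain ⟨m, rfl⟩ := Nat.exists_eq_add_of_le' hb
  simp only [mul_assoc (2 ^ a * (m + b).choose b)]
  rw [← mul_sum, sum_choose_mul_choose_sub, mul_sum, Nat.add_sub_cancel]
  symm
  refine (sum_congr rfl fun k hk => ?_).trans
    (sum_subset (range_subset_range.mpr (by omega)) fun k hk hk' => ?_)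
  · rw [mem_range] at hk
    rw [show a + b - k = a + (b - k) by omega, pow_add]
    ring
  · rw [mem_range] at hk hk'
    rw [Nat.choose_eq_zero_of_lt (show b < k by omega)]
    simp

lemma side_eq_zero (n a b : ℕ) (h : n < a ∨ n < b) :
    (∑ i ∈ range (n + 1), 2 ^ a * n.choose b * b.choose i * (n - i).choose a) = 0 := by
  refine sum_eq_zero fun i _ => ?_
  rcases h with h | h
  · rw [Nat.choose_eq_zero_of_lt (show n - i < a by omega), mul_zero]
  · rw [Nat.choose_eq_zero_of_lt h]
    simp

/-- Corollary 2 of the paper: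
`Σ_i 2^a C(n,b) C(b,i) C(n-i,a) = Σ_i 2^b C(n,a) C(a,i) C(n-i,b)`. -/
theorem binomial_sum_symm (n a b : ℕ) :
    (∑ i ∈ Finset.range (n + 1),
        2 ^ a * Nat.choose n b * Nat.choose b i * Nat.choose (n - i) a) =
      ∑ i ∈ Finset.range (n + 1),
        2 ^ b * Nat.choose n a * Nat.choose a i * Nat.choose (n - i) b := by
  by_cases h : n < a ∨ n < b
  · rw [side_eq_zero n a b h, side_eq_zero n b a h.symm]
  · rw [side_eq n a b (by omega), side_eq n b a (by omega), min_comm b a, add_comm b a]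
    refine sum_congr rfl fun k hk => ?_
    rw [mem_range] at hk
    rw [trinomial_symm n a b k (by omega) (by omega)]
end

section
/- Let n ∈ ℕ and let α, β, θ : Fin n → ℕ satisfy α_i ≤ θ_i and β_i ≤ θ_i for all i. Then in ℚ: Σ_γ 2^{||α||} · C(θ−γ, α) · C(β, γ) / C(θ, α) = Σ_γ 2^{||β||} · C(θ−γ, β) · C(α, γ) / C(θ, β), where the left sum is over multi-indices γ with γ_i ≤ β_i, the right sum over γ with γ_i ≤ α_i, C(α,β) = ∏_i (α_i choose β_i), and ||α|| = Σ_i α_i. -/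
/-!
Both sides factor over the coordinates, so it suffices to treat natural numbers `a, b ≤ t`. Let `A`
and `B` range over the `a`- and `b`-element subsets of a `t`-element set. For fixed `B`,
`2 ^ |A ∪ B| = 2 ^ a * 2 ^ |B \ A|`, and `2 ^ |B \ A|` counts the sets `G ⊆ B` disjoint from `A`;
for given `G` there are `C(t - |G|, a)` such `A`. Hence
`∑ A, ∑ B, 2 ^ |A ∪ B| = C(t, b) * 2 ^ a * ∑ g ≤ b, C(t - g, a) * C(b, g)`.
After division by `C(t, a) * C(t, b)` the right-hand side is one factor of the sum in the theorem,
and the left-hand side is symmetric in `a` and `b`.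
-/

open Finset

lemma sum_two_pow_card_union_fixed (t a b : ℕ) {B : Finset ℕ}
    (hB : B ∈ powersetCard b (range t)) :
    ∑ A ∈ powersetCard a (range t), 2 ^ (A ∪ B).card =
      2 ^ a * ∑ g ∈ Iic b, (t - g).choose a * b.choose g := by
  rw [mem_powersetCard] at hB
  obtain ⟨hBt, hBc⟩ := hB
  have h1 : ∀ A ∈ powersetCard a (range t),
      2 ^ (A ∪ B).card = 2 ^ a * ∑ G ∈ B.powerset, if Disjoint G A then 1 else 0 := by
    intro A hA
    rw [mem_powersetCard] at hA
    rw [← card_filter]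
    have : B.powerset.filter (fun G => Disjoint G A) = (B \ A).powerset := by
      ext G
      simp [subset_sdiff]
    rw [this, card_powerset, ← pow_add, ← hA.2, ← card_union_of_disjoint disjoint_sdiff,
      union_sdiff_self_eq_union]
  have h2 : ∀ G ∈ B.powerset,
      (∑ A ∈ powersetCard a (range t), if Disjoint G A then 1 else 0) = (t - G.card).choose a := by
    intro G hG
    rw [mem_powerset] at hG
    rw [← card_filter]
    have : (powersetCard a (range t)).filter (fun A => Disjoint G A) =
        powersetCard a (range t \ G) := by
      ext A
      simp only [mem_filter, mem_powersetCard, subset_sdiff, disjoint_comm (a := G)]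
      tauto
    rw [this, card_powersetCard, card_sdiff_of_subset (hG.trans hBt), card_range]
  rw [sum_congr rfl h1, ← mul_sum, sum_comm, sum_congr rfl h2,
    sum_powerset_apply_card (fun g => (t - g).choose a), hBc]
  congr 1
  refine sum_congr ?_ fun g _ => by rw [smul_eq_mul, mul_comm]
  ext g
  simp

lemma sum_two_pow_card_union (t a b : ℕ) :
    ∑ B ∈ powersetCard b (range t), ∑ A ∈ powersetCard a (range t), 2 ^ (A ∪ B).card =
      t.choose b * (2 ^ a * ∑ g ∈ Iic b, (t - g).choose a * b.choose g) := by
  rw [sum_congr rfl fun B hB => sum_two_pow_card_union_fixed t a b hB, sum_const,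
    card_powersetCard, card_range, smul_eq_mul]

/-- The one-coordinate case of the theorem, with denominators cleared. -/
lemma choose_sum_symm (t a b : ℕ) :
    t.choose b * (2 ^ a * ∑ g ∈ Iic b, (t - g).choose a * b.choose g) =
      t.choose a * (2 ^ b * ∑ g ∈ Iic a, (t - g).choose b * a.choose g) := by
  rw [← sum_two_pow_card_union, ← sum_two_pow_card_union, sum_comm]
  simp only [union_comm]

lemma multiindex_sum_eq_prod {n : ℕ} (α β θ : Fin n → ℕ) :
    (∑ γ ∈ Finset.Iic β,
        (2 : ℚ) ^ (∑ i, α i) *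
          ((∏ i, Nat.choose (θ i - γ i) (α i) : ℕ) : ℚ) *
          ((∏ i, Nat.choose (β i) (γ i) : ℕ) : ℚ) /
            ((∏ i, Nat.choose (θ i) (α i) : ℕ) : ℚ)) =
      ∏ i, ((2 ^ α i * ∑ g ∈ Iic (β i), (θ i - g).choose (α i) * (β i).choose g : ℕ) : ℚ) /
        ((θ i).choose (α i) : ℚ) := by
  have hI : Iic β = Fintype.piFinset fun i => Iic (β i) := by
    ext γ
    simp [Pi.le_def]
  push_cast
  simp_rw [mul_sum, sum_div]
  rw [prod_univ_sum, hI]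
  refine sum_congr rfl fun γ _ => ?_
  rw [prod_div_distrib, prod_mul_distrib, prod_mul_distrib, prod_pow_eq_pow_sum, mul_assoc]

/-- Lemma 3 of the paper: for multi-indices `α, β ≤ θ`,
`Σ_γ 2^{||α||} C(θ-γ,α) C(β,γ) / C(θ,α) = Σ_γ 2^{||β||} C(θ-γ,β) C(α,γ) / C(θ,β)`. -/
theorem multiindex_sum_symm {n : ℕ} (α β θ : Fin n → ℕ)
    (hα : ∀ i, α i ≤ θ i) (hβ : ∀ i, β i ≤ θ i) :
    (∑ γ ∈ Finset.Iic β,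
        (2 : ℚ) ^ (∑ i, α i) *
          ((∏ i, Nat.choose (θ i - γ i) (α i) : ℕ) : ℚ) *
          ((∏ i, Nat.choose (β i) (γ i) : ℕ) : ℚ) /
            ((∏ i, Nat.choose (θ i) (α i) : ℕ) : ℚ)) =
      ∑ γ ∈ Finset.Iic α,
        (2 : ℚ) ^ (∑ i, β i) *
          ((∏ i, Nat.choose (θ i - γ i) (β i) : ℕ) : ℚ) *
          ((∏ i, Nat.choose (α i) (γ i) : ℕ) : ℚ) /
            ((∏ i, Nat.choose (θ i) (β i) : ℕ) : ℚ) := by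
  rw [multiindex_sum_eq_prod, multiindex_sum_eq_prod]
  refine prod_congr rfl fun i _ => ?_
  have ha : ((θ i).choose (α i) : ℚ) ≠ 0 := by exact_mod_cast (Nat.choose_pos (hα i)).ne'
  have hb : ((θ i).choose (β i) : ℚ) ≠ 0 := by exact_mod_cast (Nat.choose_pos (hβ i)).ne'
  rw [div_eq_div_iff ha hb, mul_comm, mul_comm _ ((θ i).choose (α i) : ℚ)]
  exact_mod_cast choose_sum_symm (θ i) (α i) (β i)
end

section
/- Fix a, k ∈ ℕ and t in a commutative ring (e.g. t ∈ ℝ). Let M^{(a)}(t) be the (k+1)×(k+1) matrix with (i,j)-entry μ^{(a)}_{i,j}(t) = Σ_{m=0}^{i} (i choose m)·(a+j choose a+m)·t^m, for 0 ≤ i, j ≤ k. Then det M^{(a)}(t) = t^{k(k+1)/2}. -/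
open Finset

/-! The matrix factors as `L * U` with `L i m = C(i,m) t^m` lower triangular and
`U m j = C(a+j,a+m)` upper unitriangular. Hence the determinant is the product of the diagonal
entries `t^i` of `L`. -/

/-- Lemma (det of the matrix `M^{(a)}(t)`):
the `(k+1) × (k+1)` matrix with entries `μ^{(a)}_{i,j}(t) = Σ_{m=0}^i C(i,m) C(a+j,a+m) t^m`
has determinant `t^{k(k+1)/2}`. -/
theorem det_mu_matrix {R : Type*} [CommRing R] (a k : ℕ) (t : R) :
    Matrix.det (Matrix.of fun i j : Fin (k + 1) =>
        ∑ m ∈ Finset.range ((i : ℕ) + 1),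
          ((Nat.choose (i : ℕ) m * Nat.choose (a + (j : ℕ)) (a + m) : ℕ) : R) * t ^ m) =
      t ^ (k * (k + 1) / 2) := by
  let L : Matrix (Fin (k + 1)) (Fin (k + 1)) R :=
    Matrix.of fun i m => (Nat.choose (i : ℕ) (m : ℕ) : R) * t ^ (m : ℕ)
  let U : Matrix (Fin (k + 1)) (Fin (k + 1)) R :=
    Matrix.of fun m j => (Nat.choose (a + (j : ℕ)) (a + (m : ℕ)) : R)
  have hLU : (Matrix.of fun i j : Fin (k + 1) =>
      ∑ m ∈ Finset.range ((i : ℕ) + 1),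
        ((Nat.choose (i : ℕ) m * Nat.choose (a + (j : ℕ)) (a + m) : ℕ) : R) * t ^ m) = L * U := by
    ext i j
    simp only [Matrix.mul_apply, Matrix.of_apply, L, U]
    rw [Fin.sum_univ_eq_sum_range (fun m => (Nat.choose (i : ℕ) m : R) * t ^ m *
      (Nat.choose (a + (j : ℕ)) (a + m) : R)) (k + 1)]
    -- The terms with `i < m ≤ k` vanish, since then `C(i,m) = 0`.
    rw [← Finset.sum_subset (Finset.range_subset_range.2 (Nat.succ_le_of_lt i.isLt))]
    · refine Finset.sum_congr rfl fun m _ => ?_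
      push_cast
      ring
    · intro m _ hm
      rw [Nat.choose_eq_zero_of_lt (by simpa [Nat.lt_succ_iff] using hm)]
      simp
  have hL : L.det = t ^ (k * (k + 1) / 2) := by
    rw [Matrix.det_of_isLowerTriangular]
    · simp only [L, Matrix.of_apply, Nat.choose_self, Nat.cast_one, one_mul]
      rw [Fin.prod_univ_eq_prod_range (fun m => t ^ m) (k + 1), Finset.prod_pow_eq_pow_sum,
        Finset.sum_range_id, Nat.add_sub_cancel, mul_comm]
    · intro i j hij
      have h : (i : ℕ) < j := hij
      simp [L, Nat.choose_eq_zero_of_lt h]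
  have hU : U.det = 1 := by
    rw [Matrix.det_of_isUpperTriangular]
    · simp [U]
    · intro i j hij
      have h : (j : ℕ) < i := hij
      simp [U, Nat.choose_eq_zero_of_lt (Nat.add_lt_add_left h a)]
  rw [hLU, Matrix.det_mul, hL, hU, mul_one]
end

section
/- For all a, b, c ∈ ℕ and every element t of a commutative ring (e.g. t ∈ ℝ): Σ_{j=0}^{a} (a choose j)·(a+b−j choose a+c)·t^j = Σ_{i=0}^{a} (a choose i)·(b choose i+c)·(t+1)^i. -/
/-!
Both sides are the coefficient of `X ^ (a + c)` in `(t + 1 + X) ^ a * (1 + X) ^ b`: the left side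
arises by expanding the first factor as `(t + (1 + X)) ^ a`, the right side by expanding it as
`((t + 1) + X) ^ a`.
-/

open Finset

/-- Lemma: `Σ_{j=0}^a C(a,j) C(a+b-j, a+c) t^j = Σ_{i=0}^a C(a,i) C(b, i+c) (t+1)^i`. -/
theorem binomial_poly_identity {R : Type*} [CommRing R] (a b c : ℕ) (t : R) :
    (∑ j ∈ Finset.range (a + 1),
        ((Nat.choose a j * Nat.choose (a + b - j) (a + c) : ℕ) : R) * t ^ j) =
      ∑ i ∈ Finset.range (a + 1),
        ((Nat.choose a i * Nat.choose b (i + c) : ℕ) : R) * (t + 1) ^ i := by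
  open Polynomial in
  have hL : (C t + (1 + X)) ^ a * (1 + X) ^ b =
      ∑ j ∈ Finset.range (a + 1), C ((a.choose j : R) * t ^ j) * (1 + X) ^ (a + b - j) := by
    rw [add_pow, Finset.sum_mul]
    refine Finset.sum_congr rfl fun j hj => ?_
    have hj : j ≤ a := Nat.lt_succ_iff.mp (Finset.mem_range.mp hj)
    rw [show a + b - j = (a - j) + b by omega, pow_add, C_mul, C_pow, C_eq_natCast]
    ring
  open Polynomial in
  have hR : (C (t + 1) + X) ^ a * (1 + X) ^ b =
      ∑ i ∈ Finset.range (a + 1),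
        C ((a.choose i : R) * (t + 1) ^ i) * ((1 + X) ^ b * X ^ (a - i)) := by
    rw [add_pow, Finset.sum_mul]
    refine Finset.sum_congr rfl fun i _ => ?_
    rw [C_mul, C_pow, C_eq_natCast]
    ring
  open Polynomial in
  have h : (C t + (1 + X)) ^ a * (1 + X) ^ b = (C (t + 1) + X) ^ a * (1 + X) ^ b := by
    rw [C_add, C_1, add_assoc]
  rw [hL, hR] at h
  replace h := congrArg (fun p => Polynomial.coeff p (a + c)) h
  simp only [Polynomial.finsetSum_coeff, Polynomial.coeff_C_mul,
    Polynomial.coeff_one_add_X_pow] at h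
  convert h using 1
  · refine Finset.sum_congr rfl fun j _ => ?_
    push_cast
    ring
  · refine Finset.sum_congr rfl fun i hi => ?_
    have hi : i ≤ a := Nat.lt_succ_iff.mp (Finset.mem_range.mp hi)
    rw [show a + c = (i + c) + (a - i) by omega, Polynomial.coeff_mul_X_pow,
      Polynomial.coeff_one_add_X_pow]
    push_cast
    ring
end

section
/- For all a, b, c, j ∈ ℕ with j ≤ a: Σ_{i=0}^{a} (i choose j)·(a choose i)·(b choose c+i) = (a choose j)·(a+b−j choose a+c). -/
open Finset

/-!
Choosing the `j` leaders first, `C(a,i) C(i,j) = C(a,j) C(a-j,i-j)`. The terms with `i < j` vanish,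
and with `i = j + k` the rest is `C(a,j)` times a Vandermonde convolution
`Σ_k C(n,k) C(b,d+k) = C(n+b,n+d)`, where `n = a - j` and `d = c + j`.
-/

/-- Vandermonde's convolution in its symmetric form, by induction on `n` with Pascal's rule. -/
lemma sum_choose_mul_choose_add (n b d : ℕ) :
    (∑ k ∈ Finset.range (n + 1), n.choose k * b.choose (d + k)) = (n + b).choose (n + d) := by
  induction n generalizing d with
  | zero => simp
  | succ n ih =>
    -- The part of Pascal's rule that keeps the lower index; its extra term `C(n,n+1)` is zero.
    have h : (∑ k ∈ Finset.range (n + 1), n.choose (k + 1) * b.choose (d + (k + 1)))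
        + b.choose d = (n + b).choose (n + d) := by
      rw [← ih d]
      have := Finset.sum_range_succ' (fun k => n.choose k * b.choose (d + k)) (n + 1)
      rw [Finset.sum_range_succ] at this
      simpa using this.symm
    rw [Finset.sum_range_succ']
    simp only [Nat.choose_succ_succ', add_mul, Finset.sum_add_distrib, Nat.choose_zero_right,
      one_mul, add_zero]
    rw [add_assoc, h]
    have h2 := ih (d + 1)
    simp only [show ∀ k, d + 1 + k = d + (k + 1) from fun k => by omega] at h2
    rw [h2, show n + 1 + b = n + b + 1 by omega, show n + 1 + d = n + d + 1 by omega,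
      Nat.choose_succ_succ', add_comm, add_assoc n d 1]

/-- Counting identity: `Σ_{i=0}^a C(i,j) C(a,i) C(b,c+i) = C(a,j) C(a+b-j, a+c)` for `j ≤ a`. -/
theorem leaders_counting (a b c j : ℕ) (hj : j ≤ a) :
    (∑ i ∈ Finset.range (a + 1),
        Nat.choose i j * Nat.choose a i * Nat.choose b (c + i)) =
      Nat.choose a j * Nat.choose (a + b - j) (a + c) := by
  obtain ⟨n, rfl⟩ := Nat.exists_eq_add_of_le hj
  have hlow : (∑ i ∈ Finset.range j,
      Nat.choose i j * Nat.choose (j + n) i * Nat.choose b (c + i)) = 0 :=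
    Finset.sum_eq_zero fun i hi => by
      simp [Nat.choose_eq_zero_of_lt (Finset.mem_range.mp hi)]
  rw [add_assoc j n 1, Finset.sum_range_add, hlow, zero_add,
    show j + n + b - j = n + b by omega, show j + n + c = n + (c + j) by omega,
    ← sum_choose_mul_choose_add, Finset.mul_sum]
  refine Finset.sum_congr rfl fun k _ => ?_
  have h := Nat.choose_mul (n := j + n) (k := j + k) (s := j) (Nat.le_add_right j k)
  rw [Nat.add_sub_cancel_left, Nat.add_sub_cancel_left] at h
  rw [mul_comm ((j + k).choose j), h, mul_assoc, add_assoc c j k]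
end

section
/- For all a, b, c ∈ ℕ with b ≤ a and all x, y, z in a commutative ring (e.g. x, y, z ∈ ℝ): Σ_{i=0}^{b} (b choose i)·(a+b−i choose b+c)·x^{a−i}·y^{b−i}·z^i = Σ_{i=0}^{b} (b choose i)·(a choose i+c)·x^{a−i}·y^{b−i}·(z + x·y)^i. That is, d^{(c)}_{a,b}(x,y,z) = d̃^{(c)}_{a,b}(x,y,z). -/
open Finset

/-!
Expanding `(z + x * y) ^ i` on the right-hand side, the terms with `z ^ j` all carry the monomial
`x ^ (a - j) * y ^ (b - j) * z ^ j`, with total coefficient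
`∑ i, C(b, i) * C(i, j) * C(a, i + c) = C(b, j) * ∑ k, C(b - j, k) * C(a, k + (j + c))`, where
`i = j + k`. A form of Vandermonde's identity (`sum_choose_mul_choose_add`) evaluates the inner sum
to `C(a + b - j, b + c)`, which gives the left-hand side.
-/

/-- Vandermonde's identity after the reflection `C(m, k) = C(m, m - k)`. -/
lemma sum_choose_mul_choose_add_s12 (m a s : ℕ) :
    ∑ k ∈ range (m + 1), m.choose k * a.choose (k + s) = (a + m).choose (m + s) := by
  rw [add_comm a m, Nat.add_choose_eq, Nat.sum_antidiagonal_eq_sum_range_succ_mk,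
    show (m + s).succ = (m + 1) + s by omega, sum_range_add _ (m + 1) s,
    -- the terms of the convolution with first index exceeding `m` vanish
    sum_eq_zero (s := range s) (fun k _ => by
      rw [Nat.choose_eq_zero_of_lt (by omega : m < m + 1 + k), zero_mul]),
    add_zero, ← sum_range_reflect]
  refine sum_congr rfl fun k hk => ?_
  have hk : k ≤ m := Nat.lt_succ_iff.mp (mem_range.mp hk)
  rw [show m + 1 - 1 - k = m - k by omega, Nat.choose_symm hk,
    show m - k + s = m + s - k by omega]

/-- The coefficient of `z ^ j` on the right-hand side. -/
lemma sum_choose_mul_choose_mul_choose (a b c j : ℕ) (hj : j ≤ b) :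
    ∑ i ∈ range (b + 1), b.choose i * a.choose (i + c) * i.choose j =
      b.choose j * (a + b - j).choose (b + c) := by
  obtain ⟨m, rfl⟩ := Nat.exists_eq_add_of_le hj
  rw [show j + m + 1 = j + (m + 1) by omega, sum_range_add,
    sum_eq_zero (s := range j) (fun i hi => by
      rw [Nat.choose_eq_zero_of_lt (mem_range.mp hi), mul_zero]),
    zero_add, show a + (j + m) - j = a + m by omega,
    show j + m + c = m + (j + c) by omega, ← sum_choose_mul_choose_add_s12, mul_sum]
  refine sum_congr rfl fun k _ => ?_
  have h := Nat.choose_mul (n := j + m) (k := j + k) (s := j) (by omega)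
  rw [Nat.add_sub_cancel_left, Nat.add_sub_cancel_left] at h
  rw [mul_right_comm, h, mul_assoc, show j + k + c = k + (j + c) by omega]

/-- Lemma: `d^{(c)}_{a,b}(x,y,z) = d̃^{(c)}_{a,b}(x,y,z)`, i.e.
`Σ_{i=0}^b C(b,i) C(a+b-i, b+c) x^{a-i} y^{b-i} z^i
  = Σ_{i=0}^b C(b,i) C(a, i+c) x^{a-i} y^{b-i} (z+xy)^i`. -/
theorem d_eq_dtilde {R : Type*} [CommRing R] (a b c : ℕ) (hba : b ≤ a) (x y z : R) :
    (∑ i ∈ Finset.range (b + 1),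
        ((Nat.choose b i * Nat.choose (a + b - i) (b + c) : ℕ) : R) *
          x ^ (a - i) * y ^ (b - i) * z ^ i) =
      ∑ i ∈ Finset.range (b + 1),
        ((Nat.choose b i * Nat.choose a (i + c) : ℕ) : R) *
          x ^ (a - i) * y ^ (b - i) * (z + x * y) ^ i := by
  -- for `j > i` the summand vanishes, so the binomial expansion may run over all `j ≤ b`
  have expand : ∀ i ∈ range (b + 1),
      ((Nat.choose b i * Nat.choose a (i + c) : ℕ) : R) *
          x ^ (a - i) * y ^ (b - i) * (z + x * y) ^ i =
        ∑ j ∈ range (b + 1),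
          ((b.choose i * a.choose (i + c) * i.choose j : ℕ) : R) *
            (x ^ (a - j) * y ^ (b - j) * z ^ j) := by
    intro i hi
    have hi : i ≤ b := Nat.lt_succ_iff.mp (mem_range.mp hi)
    rw [add_pow, mul_sum]
    refine sum_subset_zero_on_sdiff (range_subset_range.mpr (by omega)) ?_ ?_
    · intro j hj
      have hj : i < j := by simp at hj; omega
      rw [Nat.choose_eq_zero_of_lt hj, mul_zero, Nat.cast_zero, zero_mul]
    · intro j hj
      have hj : j ≤ i := Nat.lt_succ_iff.mp (mem_range.mp hj)
      rw [show a - j = (a - i) + (i - j) by omega, show b - j = (b - i) + (i - j) by omega]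
      push_cast
      ring
  rw [sum_congr rfl expand, sum_comm]
  refine sum_congr rfl fun j hj => ?_
  rw [← sum_mul, ← Nat.cast_sum,
    sum_choose_mul_choose_mul_choose a b c j (Nat.lt_succ_iff.mp (mem_range.mp hj))]
  ring
end

section
/- Fix a, k ∈ ℕ and x, y, z in a commutative ring (e.g. x, y, z ∈ ℝ). Let M̃^{(a,k)}(x,y,z) be the (k+1)×(k+1) matrix whose (i,j)-entry, for 0 ≤ i, j ≤ k, is d̃^{(a)}_{a+j,i}(x,y,z) = Σ_{m=0}^{min(i,j)} (i choose m)·(a+j choose a+m)·x^{a+j−m}·y^{i−m}·(z + x·y)^m. Then det M̃^{(a,k)}(x,y,z) = x^{a(k+1)} · (x·y + z)^{k(k+1)/2}. -/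
/-!
The matrix factors as `L * U`, where `L i m = C(i,m) y^(i-m) (z+xy)^m` is lower triangular with
diagonal entries `(z+xy)^m`, and `U m j = C(a+j,a+m) x^(a+j-m)` is upper triangular with all
diagonal entries equal to `x^a`. The determinant is the product of the two diagonals, and the
exponents `0 + 1 + ⋯ + k` of `z+xy` add up to `k(k+1)/2`.
-/

open Finset

/-- Lemma: the `(k+1) × (k+1)` matrix with `(i,j)`-entry
`d̃^{(a)}_{a+j,i}(x,y,z) = Σ_{m=0}^{min(i,j)} C(i,m) C(a+j, a+m) x^{a+j-m} y^{i-m} (z+xy)^m`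
has determinant `x^{a(k+1)} (xy+z)^{k(k+1)/2}`. -/
theorem det_dtilde_matrix {R : Type*} [CommRing R] (a k : ℕ) (x y z : R) :
    Matrix.det (Matrix.of fun i j : Fin (k + 1) =>
        ∑ m ∈ Finset.range (min (i : ℕ) (j : ℕ) + 1),
          ((Nat.choose (i : ℕ) m * Nat.choose (a + (j : ℕ)) (a + m) : ℕ) : R) *
            x ^ (a + (j : ℕ) - m) * y ^ ((i : ℕ) - m) * (z + x * y) ^ m) =
      x ^ (a * (k + 1)) * (x * y + z) ^ (k * (k + 1) / 2) := by
  let L : Matrix (Fin (k + 1)) (Fin (k + 1)) R := Matrix.of fun i m =>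
    (Nat.choose (i : ℕ) m : R) * y ^ ((i : ℕ) - m) * (z + x * y) ^ (m : ℕ)
  let U : Matrix (Fin (k + 1)) (Fin (k + 1)) R := Matrix.of fun m j =>
    (Nat.choose (a + (j : ℕ)) (a + m) : R) * x ^ (a + (j : ℕ) - m)
  have hL : L.det = (x * y + z) ^ (k * (k + 1) / 2) := by
    rw [Matrix.det_of_isLowerTriangular]
    · simp only [L, Matrix.of_apply, Nat.choose_self, Nat.sub_self, pow_zero, Nat.cast_one,
        one_mul]
      rw [Fin.prod_univ_eq_prod_range (fun m => (z + x * y) ^ m) (k + 1),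
        Finset.prod_pow_eq_pow_sum, Finset.sum_range_id, Nat.add_sub_cancel, mul_comm (k + 1) k,
        add_comm z]
    · intro i j hij
      have hij' : (i : ℕ) < j := hij
      simp [L, Nat.choose_eq_zero_of_lt hij']
  have hU : U.det = x ^ (a * (k + 1)) := by
    rw [Matrix.det_of_isUpperTriangular]
    · simp [U, pow_mul]
    · intro i j hij
      have hij' : (j : ℕ) < i := hij
      simp [U, Nat.choose_eq_zero_of_lt (Nat.add_lt_add_left hij' a)]
  rw [← hL, ← hU, mul_comm U.det, ← Matrix.det_mul]
  congr 1
  ext i j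
  simp only [Matrix.mul_apply, Matrix.of_apply, L, U]
  rw [Fin.sum_univ_eq_sum_range (fun m => ((Nat.choose (i : ℕ) m : R) * y ^ ((i : ℕ) - m) *
    (z + x * y) ^ m) * ((Nat.choose (a + (j : ℕ)) (a + m) : R) * x ^ (a + (j : ℕ) - m))) (k + 1)]
  -- The terms with `m > min i j` vanish, so the sum may be extended to all `m ≤ k`.
  rw [← Finset.sum_subset (s₁ := Finset.range (min (i : ℕ) (j : ℕ) + 1))
    (s₂ := Finset.range (k + 1))]
  · refine Finset.sum_congr rfl fun m _ => ?_
    push_cast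
    ring
  · intro m hm
    have := i.isLt
    simp only [Finset.mem_range] at hm ⊢
    omega
  · intro m _ hm
    simp only [Finset.mem_range] at hm
    rcases lt_or_ge (i : ℕ) m with h | h
    · simp [Nat.choose_eq_zero_of_lt h]
    · have h' : a + (j : ℕ) < a + m := by omega
      simp [Nat.choose_eq_zero_of_lt h']
end

section
/- For all a, b, i, j ∈ ℕ: Σ_{m=0}^{b+i} (b+i choose m)·(b+j choose m)·m!·(a+b+i+j−m)! = (a+i)!·(b+j)!·Σ_{m=0}^{b+i} (b+i choose m)·(a+b+i+j−m choose a+i). That is, η^{(a,b)}_{i,j} = (a+i)!(b+j)! Σ_{m=0}^{b+i} (b+i choose m)(a+b+i+j−m choose a+i). -/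
open Finset

/-! The identity holds term by term. For `m ≤ b + j` both terms equal
`C(b+i,m) (b+j)! (a+b+i+j-m)! / (b+j-m)!`; for `b + j < m ≤ b + i` both vanish, since then
`a + b + i + j - m < a + i`. -/

/-- `η^{(a,b)}_{i,j} = Σ_m C(b+i,m) C(b+j,m) m! (a+b+i+j-m)!
  = (a+i)! (b+j)! Σ_m C(b+i,m) C(a+b+i+j-m, a+i)`. -/
theorem eta_factored (a b i j : ℕ) :
    (∑ m ∈ Finset.range (b + i + 1),
        Nat.choose (b + i) m * Nat.choose (b + j) m *
          Nat.factorial m * Nat.factorial (a + b + i + j - m)) =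
      Nat.factorial (a + i) * Nat.factorial (b + j) *
        ∑ m ∈ Finset.range (b + i + 1),
          Nat.choose (b + i) m * Nat.choose (a + b + i + j - m) (a + i) := by
  rw [Finset.mul_sum]
  refine Finset.sum_congr rfl fun m hm => ?_
  have hm' : m ≤ b + i := by
    have := Finset.mem_range.mp hm
    omega
  rcases le_or_gt m (b + j) with h | h
  · obtain ⟨k, hk⟩ := Nat.exists_eq_add_of_le h
    have hsub : a + b + i + j - m = (a + i) + k := by omega
    have h1 : Nat.choose (b + j) m * m.factorial * k.factorial = (b + j).factorial := by
      have := Nat.choose_mul_factorial_mul_factorial h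
      rwa [show b + j - m = k by omega] at this
    have h2 := Nat.add_choose_mul_factorial_mul_factorial (a + i) k
    rw [hsub, ← h1, ← h2, Nat.choose_symm_add]
    ring
  · rw [Nat.choose_eq_zero_of_lt h,
      Nat.choose_eq_zero_of_lt (show a + b + i + j - m < a + i by omega)]
    simp
end

section
/- Fix a, k ∈ ℕ and let N^{(a,k)} be the (k+1)×(k+1) matrix with (i,j)-entry η^{(a,0)}_{i,j} = Σ_{m=0}^{i} (i choose m)·(j choose m)·m!·(a+i+j−m)!, for 0 ≤ i, j ≤ k. Then det N^{(a,k)} = (∏_{i=0}^{k} i!) · (∏_{j=0}^{k} (a+j)!) · 2^{k(k+1)/2}; in particular det N^{(a,k)} > 0. -/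
open Finset

/-!
The generating function `∑ η_{i,j} x^i y^j / (i! j!)` equals `a! (1 - x - y - x y)^{-(a+1)}`.
Writing `1 - x - y - x y = (1 - x)(1 - y) - 2 x y` and expanding in powers of `2 x y` gives the
LDU factorization `η_{i,j} = ∑_l P_i(l) W_l P_j(l)`, where `P_i(l) = i! C(a+i, a+l)` vanishes for
`l > i` and `W_l = (a+l)! 2^l / l!`. The determinant is therefore `∏ (P_i(i))^2 W_i`, which is the
product of the `i! (a+i)! 2^i`.

The factorization (`eta_eq_ldu`) is proved without power series: both sides agree for `i = 0` and
satisfy the recurrence `f (i+1) j - f i (j+1) = (j - i) f i j`, the coefficient form of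
`(1 + x) G_x = (1 + y) G_y` (`eta_rec`, `ldu_rec`). For each side the recurrence comes from
a termwise identity with a shift of the summation index.
-/

/-- The summand of `η^{(a,0)}_{i,j}`. -/
def etaTerm (a i j m : ℕ) : ℚ :=
  (i.choose m : ℚ) * j.choose m * m.factorial * (a + i + j - m).factorial

/-- The entry `(i, l)` of the lower triangular factor. -/
def lowerEntry (a i l : ℕ) : ℚ := (i.factorial : ℚ) * (a + i).choose (a + l)

/-- The `l`-th entry of the diagonal factor. -/
def diagEntry (a l : ℕ) : ℚ := ((a + l).factorial : ℚ) * 2 ^ l / l.factorial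

/-- The `l`-th summand in the entry `(i, j)` of the product of the triangular, the diagonal and the
transposed triangular factor. -/
def lduTerm (a i j l : ℕ) : ℚ := lowerEntry a i l * diagEntry a l * lowerEntry a j l

/-- Valid for all `n` and `m`: for `m > n` both sides vanish. -/
lemma cast_choose_succ_mul (n m : ℕ) :
    (n.choose (m + 1) : ℚ) * (m + 1) = n.choose m * ((n : ℚ) - m) := by
  rcases le_or_gt m n with h | h
  · rw [← Nat.cast_sub h]
    exact_mod_cast Nat.choose_succ_right_eq n m
  · simp [Nat.choose_eq_zero_of_lt h, Nat.choose_eq_zero_of_lt (Nat.lt_succ_of_lt h)]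

lemma etaTerm_rec_zero (a i j : ℕ) : etaTerm a (i + 1) j 0 = etaTerm a i (j + 1) 0 := by
  simp [etaTerm, show a + (i + 1) + j = a + i + (j + 1) by ring]

lemma etaTerm_rec_succ (a i j m : ℕ) :
    etaTerm a (i + 1) j (m + 1) - etaTerm a i (j + 1) (m + 1)
      = ((j : ℚ) - i) * etaTerm a i j m := by
  unfold etaTerm
  rw [show a + (i + 1) + j - (m + 1) = a + i + j - m by omega,
    show a + i + (j + 1) - (m + 1) = a + i + j - m by omega,
    Nat.choose_succ_succ i, Nat.choose_succ_succ j, Nat.factorial_succ]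
  push_cast
  have hi := cast_choose_succ_mul i m
  have hj := cast_choose_succ_mul j m
  linear_combination (m.factorial : ℚ) * (a + i + j - m).factorial *
    ((i.choose m : ℚ) * hj - (j.choose m : ℚ) * hi)

lemma eta_rec (a i j : ℕ) :
    ∑ m ∈ range (i + 2), etaTerm a (i + 1) j m - ∑ m ∈ range (i + 1), etaTerm a i (j + 1) m
      = ((j : ℚ) - i) * ∑ m ∈ range (i + 1), etaTerm a i j m := by
  have hlast : etaTerm a i (j + 1) (i + 1) = 0 := by simp [etaTerm]
  have hext : ∑ m ∈ range (i + 1), etaTerm a i (j + 1) m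
      = ∑ m ∈ range (i + 2), etaTerm a i (j + 1) m := by
    rw [sum_range_succ _ (i + 1), hlast, add_zero]
  rw [hext, ← sum_sub_distrib, sum_range_succ', etaTerm_rec_zero, sub_self, add_zero, mul_sum]
  exact sum_congr rfl fun m _ => etaTerm_rec_succ a i j m

lemma lowerEntry_shift (a i l : ℕ) :
    lowerEntry a i (l + 1) * (a + l + 1) = lowerEntry a i l * ((i : ℚ) - l) := by
  have h := cast_choose_succ_mul (a + i) (a + l)
  unfold lowerEntry
  rw [← add_assoc]
  push_cast at h
  linear_combination (i.factorial : ℚ) * h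

lemma lowerEntry_rec_zero (a i : ℕ) :
    lowerEntry a (i + 1) 0 = lowerEntry a i 0 * (i + 1 + a) := by
  have h := Nat.choose_mul_succ_eq (a + i) a
  rw [show a + i + 1 - a = i + 1 by omega] at h
  have h' : ((a + i).choose a : ℚ) * (a + i + 1) = (a + i + 1).choose a * (i + 1) := by
    exact_mod_cast h
  unfold lowerEntry
  rw [Nat.factorial_succ, add_zero, ← add_assoc]
  push_cast
  linear_combination -(i.factorial : ℚ) * h'

lemma lowerEntry_rec_succ (a i l : ℕ) :
    lowerEntry a (i + 1) (l + 1)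
      = lowerEntry a i (l + 1) * (i + 2 + a + l) + (l + 1) * lowerEntry a i l := by
  have h := cast_choose_succ_mul (a + i) (a + l)
  unfold lowerEntry
  rw [Nat.factorial_succ, ← add_assoc, ← add_assoc, Nat.choose_succ_succ]
  push_cast at h ⊢
  linear_combination -(i.factorial : ℚ) * h

lemma diagEntry_succ (a l : ℕ) :
    diagEntry a (l + 1) * (l + 1) = 2 * (a + l + 1) * diagEntry a l := by
  have h : (l.factorial : ℚ) ≠ 0 := by exact_mod_cast l.factorial_ne_zero
  unfold diagEntry
  rw [← add_assoc, Nat.factorial_succ, Nat.factorial_succ]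
  push_cast
  field_simp
  ring

lemma lduTerm_rec_zero (a i j : ℕ) :
    lduTerm a (i + 1) j 0 - lduTerm a i (j + 1) 0 = ((i : ℚ) - j) * lduTerm a i j 0 := by
  unfold lduTerm
  rw [lowerEntry_rec_zero, lowerEntry_rec_zero]
  ring

lemma lduTerm_rec_succ (a i j l : ℕ) :
    lduTerm a (i + 1) j (l + 1) - lduTerm a i (j + 1) (l + 1)
      = ((i : ℚ) - j) * lduTerm a i j (l + 1) + 2 * ((j : ℚ) - i) * lduTerm a i j l := by
  unfold lduTerm
  rw [lowerEntry_rec_succ, lowerEntry_rec_succ]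
  have hd := diagEntry_succ a l
  have hi := lowerEntry_shift a i l
  have hj := lowerEntry_shift a j l
  linear_combination
    (lowerEntry a i l * lowerEntry a j (l + 1) - lowerEntry a i (l + 1) * lowerEntry a j l) * hd
    + 2 * diagEntry a l * (lowerEntry a i l * hj - lowerEntry a j l * hi)

lemma lduTerm_eq_zero {a i j l : ℕ} (h : i < l) : lduTerm a i j l = 0 := by
  simp [lduTerm, lowerEntry, Nat.choose_eq_zero_of_lt (Nat.add_lt_add_left h a)]

lemma ldu_rec (a i j : ℕ) :
    ∑ l ∈ range (i + 2), lduTerm a (i + 1) j l - ∑ l ∈ range (i + 1), lduTerm a i (j + 1) l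
      = ((j : ℚ) - i) * ∑ l ∈ range (i + 1), lduTerm a i j l := by
  have hext (j : ℕ) : ∑ l ∈ range (i + 1), lduTerm a i j l
      = ∑ l ∈ range (i + 2), lduTerm a i j l := by
    rw [sum_range_succ _ (i + 1), lduTerm_eq_zero (Nat.lt_succ_self i), add_zero]
  have hsplit := sum_range_succ' (lduTerm a i j) (i + 1)
  have hterm : ∑ l ∈ range (i + 1),
      (lduTerm a (i + 1) j (l + 1) - lduTerm a i (j + 1) (l + 1))
      = ((i : ℚ) - j) * ∑ l ∈ range (i + 1), lduTerm a i j (l + 1)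
        + 2 * ((j : ℚ) - i) * ∑ l ∈ range (i + 1), lduTerm a i j l := by
    rw [mul_sum, mul_sum, ← sum_add_distrib]
    exact sum_congr rfl fun l _ => lduTerm_rec_succ a i j l
  rw [hext (j + 1), ← sum_sub_distrib, sum_range_succ', hterm, lduTerm_rec_zero]
  linear_combination ((j : ℚ) - i) * (hsplit + hext j)

lemma eta_eq_ldu (a i j : ℕ) :
    ∑ m ∈ range (i + 1), etaTerm a i j m = ∑ l ∈ range (i + 1), lduTerm a i j l := by
  induction i generalizing j with
  | zero =>
    have h : ((a + j).choose a : ℚ) * a.factorial * j.factorial = (a + j).factorial := by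
      have h := Nat.choose_mul_factorial_mul_factorial (Nat.le_add_right a j)
      rw [Nat.add_sub_cancel_left] at h
      exact_mod_cast h
    simp only [zero_add, sum_range_one, etaTerm, lduTerm, lowerEntry, diagEntry]
    simp
    linear_combination -h
  | succ i ih =>
    have h1 := eta_rec a i j
    have h2 := ldu_rec a i j
    rw [ih, ih] at h1
    linear_combination h1 - h2

/-- The lower triangular factor. -/
def lowerMatrix (a k : ℕ) : Matrix (Fin (k + 1)) (Fin (k + 1)) ℚ :=
  Matrix.of fun i l => lowerEntry a i l

lemma det_lowerMatrix (a k : ℕ) :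
    (lowerMatrix a k).det = ∏ i ∈ range (k + 1), (i.factorial : ℚ) := by
  rw [Matrix.det_of_lowerTriangular, ← Fin.prod_univ_eq_prod_range]
  · simp [lowerMatrix, lowerEntry]
  · intro i l hil
    have h : (i : ℕ) < l := hil
    simp [lowerMatrix, lowerEntry, Nat.choose_eq_zero_of_lt (Nat.add_lt_add_left h a)]

lemma eta_matrix_eq (a k : ℕ) :
    (Matrix.of fun i j : Fin (k + 1) =>
        ((∑ m ∈ Finset.range ((i : ℕ) + 1),
          Nat.choose (i : ℕ) m * Nat.choose (j : ℕ) m *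
            Nat.factorial m * Nat.factorial (a + (i : ℕ) + (j : ℕ) - m) : ℕ) : ℚ))
      = lowerMatrix a k * Matrix.diagonal (fun l : Fin (k + 1) => diagEntry a l)
        * (lowerMatrix a k).transpose := by
  ext i j
  have hsum : ∑ l ∈ range ((i : ℕ) + 1), lduTerm a i j l
      = ∑ l ∈ range (k + 1), lduTerm a i j l := by
    refine sum_subset (range_subset_range.2 (by omega)) fun l _ hl => lduTerm_eq_zero ?_
    simpa [Nat.succ_le_iff] using hl
  rw [Matrix.mul_apply]
  simp only [Matrix.mul_diagonal, Matrix.transpose_apply, lowerMatrix, Matrix.of_apply]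
  rw [Fin.sum_univ_eq_sum_range (fun l => lowerEntry a i l * diagEntry a l * lowerEntry a j l)]
  have h := (eta_eq_ldu a i j).trans hsum
  simp only [etaTerm, lduTerm] at h
  rw [← h]
  push_cast
  rfl

lemma det_eta (a k : ℕ) :
    (lowerMatrix a k * Matrix.diagonal (fun l : Fin (k + 1) => diagEntry a l)
        * (lowerMatrix a k).transpose).det =
      ((∏ i ∈ Finset.range (k + 1), Nat.factorial i : ℕ) : ℚ) *
        ((∏ j ∈ Finset.range (k + 1), Nat.factorial (a + j) : ℕ) : ℚ) *
          2 ^ (k * (k + 1) / 2) := by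
  have hpow : (2 : ℚ) ^ (k * (k + 1) / 2) = ∏ i ∈ range (k + 1), 2 ^ i := by
    rw [prod_pow_eq_pow_sum, sum_range_id, Nat.add_sub_cancel, mul_comm k]
  rw [Matrix.det_mul, Matrix.det_mul, Matrix.det_transpose, Matrix.det_diagonal, det_lowerMatrix,
    Fin.prod_univ_eq_prod_range (diagEntry a), hpow]
  push_cast
  simp only [← prod_mul_distrib]
  refine prod_congr rfl fun i _ => ?_
  have h : (i.factorial : ℚ) ≠ 0 := by exact_mod_cast i.factorial_ne_zero
  unfold diagEntry
  field_simp

/-- Lemma: the matrix `N^{(a,k)}` with entries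
`η^{(a,0)}_{i,j} = Σ_{m=0}^i C(i,m) C(j,m) m! (a+i+j-m)!` has determinant
`(Π_{i=0}^k i!) (Π_{j=0}^k (a+j)!) 2^{k(k+1)/2}`, which is positive. -/
theorem det_N_matrix (a k : ℕ) :
    Matrix.det (Matrix.of fun i j : Fin (k + 1) =>
        ((∑ m ∈ Finset.range ((i : ℕ) + 1),
          Nat.choose (i : ℕ) m * Nat.choose (j : ℕ) m *
            Nat.factorial m * Nat.factorial (a + (i : ℕ) + (j : ℕ) - m) : ℕ) : ℚ)) =
      ((∏ i ∈ Finset.range (k + 1), Nat.factorial i : ℕ) : ℚ) *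
        ((∏ j ∈ Finset.range (k + 1), Nat.factorial (a + j) : ℕ) : ℚ) *
          2 ^ (k * (k + 1) / 2) ∧
    0 < Matrix.det (Matrix.of fun i j : Fin (k + 1) =>
        ((∑ m ∈ Finset.range ((i : ℕ) + 1),
          Nat.choose (i : ℕ) m * Nat.choose (j : ℕ) m *
            Nat.factorial m * Nat.factorial (a + (i : ℕ) + (j : ℕ) - m) : ℕ) : ℚ)) := by
  rw [eta_matrix_eq, det_eta]
  exact ⟨rfl, by positivity⟩
end

section
/- Let a, k ∈ ℕ and λ : Fin (k+1) → ℝ. Set η^{(a,0)}_{i,j} = Σ_{m=0}^{i} (i choose m)·(j choose m)·m!·(a+i+j−m)!. Then Σ_{i=0}^{k} Σ_{j=0}^{k} λ_i · λ_j · η^{(a,0)}_{i,j} ≥ 0, and if this sum equals 0 then λ_i = 0 for all i. (Equivalently: for X = Σ_{i=0}^{k} λ_i x^{a+i}∂^{i} in the Weyl algebra A_1, ⟨X,X⟩ ≥ 0 with equality only for X = 0.) -/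
open Finset

/-!
The functional `T` is a weighted trace: `x^α ∂^α` acts on `x^n` by the falling factorial
`n (n-1) ⋯ (n-α+1)`, and `∑ n, 2^{-(n+1)} (n.descFactorial α) = α!`. Hence
`T(X) = ∑ n, 2^{-(n+1)} ⟨n|X|n⟩`, and evaluating `x^{a+i} ∂^i x^j ∂^{a+j}` on `x^{a+p}` gives
`η_{i,j} = ∑ p, w_p [p]_i [p]_j` with positive weights `w_p = 2^{-(a+p+1)} [a+p]_a`, where `[p]_i`
is the falling factorial (`eta_hasSum`).

The quadratic form is therefore `∑ p, w_p (∑ i, λ_i [p]_i)²`, which is nonnegative. If it vanishes,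
then `∑ i, λ_i [p]_i = 0` for every `p`, and this system is triangular with diagonal entries
`p! ≠ 0`, so `λ = 0`.
-/

/-- Linearization of a product of falling factorials; Vandermonde's identity applied to
`p = j + (p - j)`. -/
lemma descFactorial_mul_descFactorial_eq_sum (p i j : ℕ) :
    p.descFactorial i * p.descFactorial j =
      ∑ m ∈ range (i + 1), i.choose m * j.choose m * m.factorial *
        p.descFactorial (i + j - m) := by
  rcases lt_or_ge p j with h | h
  · rw [Nat.descFactorial_of_lt h, mul_zero, eq_comm]
    refine sum_eq_zero fun m hm => ?_
    rw [mem_range] at hm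
    rw [Nat.descFactorial_of_lt (by omega : p < i + j - m), mul_zero]
  · obtain ⟨q, rfl⟩ := Nat.exists_eq_add_of_le h
    rw [Nat.descFactorial_eq_factorial_mul_choose (j + q) i, Nat.add_choose_eq,
      Finset.Nat.sum_antidiagonal_eq_sum_range_succ_mk, mul_sum, sum_mul]
    refine sum_congr rfl fun m hm => ?_
    rw [mem_range] at hm
    have hmi : m ≤ i := by omega
    have h1 : (j + q).descFactorial (i + j - m) =
        q.descFactorial (i - m) * (j + q).descFactorial j := by
      have := Nat.descFactorial_mul_descFactorial (n := j + q) (k := j) (m := i + j - m) (by omega)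
      rw [← this]
      congr 2 <;> omega
    rw [h1, ← Nat.choose_mul_factorial_mul_factorial hmi,
      Nat.descFactorial_eq_factorial_mul_choose q]
    ring

/-- The positive weights `2^{-(a+p+1)} [a+p]_a`. -/
noncomputable def etaWeight (a p : ℕ) : ℝ :=
  (1 / 2) ^ (a + p + 1) * ((a + p).descFactorial a : ℝ)

lemma etaWeight_pos (a p : ℕ) : 0 < etaWeight a p := by
  have : 0 < (a + p).descFactorial a := Nat.descFactorial_pos.mpr (Nat.le_add_right a p)
  unfold etaWeight
  positivity

/-- The factorial moments of the weights; this is the identity `T(x^α ∂^α) = α!` at `α = a + s`. -/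
lemma etaWeight_hasSum (a s : ℕ) :
    HasSum (fun p => etaWeight a p * (p.descFactorial s : ℝ)) ((a + s).factorial : ℝ) := by
  -- The terms with `p < s` vanish, and the shifted series is a negative binomial one.
  rw [← hasSum_nat_add_iff' s]
  have h0 : ∑ p ∈ range s, etaWeight a p * (p.descFactorial s : ℝ) = 0 :=
    sum_eq_zero fun p hp => by
      rw [Nat.descFactorial_of_lt (mem_range.mp hp), Nat.cast_zero, mul_zero]
  rw [h0, sub_zero]
  have h := (hasSum_choose_mul_geometric_of_norm_lt_one (𝕜 := ℝ) (a + s) (r := 1 / 2)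
    (by norm_num)).mul_left (((a + s).factorial : ℝ) * (1 / 2) ^ (a + s + 1))
  convert h using 1
  · rfl
  · funext q
    have h1 : (a + (q + s)).descFactorial a * (q + s).descFactorial s =
        (a + s).factorial * (q + (a + s)).choose (a + s) := by
      rw [← Nat.descFactorial_eq_factorial_mul_choose,
        ← Nat.descFactorial_mul_descFactorial (n := q + (a + s)) (k := a) (m := a + s) (by omega),
        mul_comm]
      congr 2 <;> omega
    have h2 : ((a + (q + s)).descFactorial a : ℝ) * ((q + s).descFactorial s : ℝ) =
        ((a + s).factorial : ℝ) * ((q + (a + s)).choose (a + s) : ℝ) := by exact_mod_cast h1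
    unfold etaWeight
    rw [mul_assoc, h2]
    ring
  · have h3 : (1 : ℝ) - 1 / 2 = 1 / 2 := by norm_num
    rw [h3]
    field_simp

/-- `η_{i,j}` as a Gram matrix: `η_{i,j} = ∑ p, w_p [p]_i [p]_j`. -/
lemma eta_hasSum (a i j : ℕ) :
    HasSum (fun p => etaWeight a p * ((p.descFactorial i : ℝ) * (p.descFactorial j : ℝ)))
      ((∑ m ∈ range (i + 1), i.choose m * j.choose m * m.factorial *
        (a + i + j - m).factorial : ℕ) : ℝ) := by
  have h := hasSum_sum (s := range (i + 1)) fun m _ =>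
    (etaWeight_hasSum a (i + j - m)).mul_left
      ((i.choose m : ℝ) * (j.choose m : ℝ) * (m.factorial : ℝ))
  convert h using 1
  · rfl
  · funext p
    rw [← Nat.cast_mul, descFactorial_mul_descFactorial_eq_sum]
    push_cast
    rw [mul_sum]
    exact sum_congr rfl fun m _ => by ring
  · push_cast
    refine sum_congr rfl fun m hm => ?_
    rw [mem_range] at hm
    rw [show a + i + j - m = a + (i + j - m) by omega]

/-- Lemma: the quadratic form with matrix `η^{(a,0)}_{i,j} = Σ_{m=0}^i C(i,m) C(j,m) m! (a+i+j-m)!`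
is nonnegative and vanishes only at `0`; equivalently `⟨X,X⟩ ≥ 0` with equality only for
`X = 0`, for `X = Σ_i λ_i x^{a+i} ∂^i` in the Weyl algebra `A_1`. -/
theorem eta_quadratic_form_posDef (a k : ℕ) (lam : Fin (k + 1) → ℝ) :
    0 ≤ (∑ i : Fin (k + 1), ∑ j : Fin (k + 1), lam i * lam j *
        ((∑ m ∈ Finset.range ((i : ℕ) + 1),
          Nat.choose (i : ℕ) m * Nat.choose (j : ℕ) m *
            Nat.factorial m * Nat.factorial (a + (i : ℕ) + (j : ℕ) - m) : ℕ) : ℝ)) ∧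
    ((∑ i : Fin (k + 1), ∑ j : Fin (k + 1), lam i * lam j *
        ((∑ m ∈ Finset.range ((i : ℕ) + 1),
          Nat.choose (i : ℕ) m * Nat.choose (j : ℕ) m *
            Nat.factorial m * Nat.factorial (a + (i : ℕ) + (j : ℕ) - m) : ℕ) : ℝ)) = 0 →
      ∀ i, lam i = 0) := by
  have hS := hasSum_sum (s := univ) fun (i : Fin (k + 1)) _ =>
    hasSum_sum (s := univ) fun (j : Fin (k + 1)) _ =>
      (eta_hasSum a i j).mul_left (lam i * lam j)
  have hfun : (fun p => ∑ i : Fin (k + 1), ∑ j : Fin (k + 1), lam i * lam j *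
      (etaWeight a p * ((p.descFactorial i : ℝ) * (p.descFactorial j : ℝ)))) =
      fun p => etaWeight a p * (∑ i : Fin (k + 1), lam i * (p.descFactorial i : ℝ)) ^ 2 := by
    funext p
    rw [sq, sum_mul_sum, mul_sum]
    refine sum_congr rfl fun i _ => ?_
    rw [mul_sum]
    exact sum_congr rfl fun j _ => by ring
  rw [hfun] at hS
  have hnn : ∀ p, 0 ≤ etaWeight a p *
      (∑ i : Fin (k + 1), lam i * (p.descFactorial i : ℝ)) ^ 2 :=
    fun p => mul_nonneg (etaWeight_pos a p).le (sq_nonneg _)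
  refine ⟨hS.nonneg hnn, fun h0 => ?_⟩
  rw [h0, hasSum_zero_iff_of_nonneg hnn] at hS
  have hz : ∀ p : ℕ, ∑ i : Fin (k + 1), lam i * (p.descFactorial i : ℝ) = 0 := fun p => by
    have := congrFun hS p
    simpa [(etaWeight_pos a p).ne'] using this
  -- Evaluating at `p = n` isolates `lam n`: larger indices give `[n]_i = 0`, smaller ones are
  -- covered by the induction hypothesis.
  have key : ∀ n : ℕ, ∀ i : Fin (k + 1), (i : ℕ) = n → lam i = 0 := by
    intro n
    induction n using Nat.strong_induction_on with
    | _ n ih =>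
      rintro i rfl
      have h := hz i
      rw [sum_eq_single i ?_ (by simp)] at h
      · rw [Nat.descFactorial_self] at h
        exact (mul_eq_zero.mp h).resolve_right (by exact_mod_cast Nat.factorial_ne_zero _)
      · intro j _ hj
        rcases lt_or_gt_of_ne (Fin.val_ne_of_ne hj) with hlt | hgt
        · rw [ih j hlt j rfl, zero_mul]
        · rw [Nat.descFactorial_of_lt hgt, Nat.cast_zero, mul_zero]
  exact fun i => key i i rfl
end
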